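/- Let N ≥ 1, let q > 2 satisfy q ≥ 1 + N/2, set q' = q/(q−1), and let T > 0. For a positive bounded Radon measure μ on ℝ^N define ‖μ‖_* = sup{ ∫_{ℝ^N} η dμ : η ∈ C_c^∞(ℝ^N), ‖η‖_{L^{q'}(ℝ^N)} + ‖η‖_{Ḃ^{2/q,q'}(ℝ^N)} ≤ 1 }. Then there exists c = c(T, q, N) > 0 such that for every positive bounded Radon measure μ on ℝ^N with ‖μ‖_* < ∞: c^{-1} ‖μ‖_* ≤ (∬_{ℝ^N×(0,T]} ℍ[μ](x,t)^q dx dt)^{1/q} ≤ c ‖μ‖_*. -/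

import Mathlib

open MeasureTheory Real Set Filter Metric

noncomputable section

abbrev Euc (N : ℕ) := EuclideanSpace ℝ (Fin N)

/-- Spatial Laplacian of `f : ℝ^N → ℝ`. -/
def lapl {N : ℕ} (f : Euc N → ℝ) (x : Euc N) : ℝ :=
  ∑ i : Fin N,
    fderiv ℝ (fun y => fderiv ℝ f y (EuclideanSpace.single i 1)) x (EuclideanSpace.single i 1)

/-- The capacity `C_{2/q,q'}` of a set `A ⊆ ℝ^N`. -/
def capQ (N : ℕ) (q : ℝ) (A : Set (Euc N)) : ℝ :=
  sInf { c : ℝ | ∃ φ : Euc N → ℝ, ContDiff ℝ (⊤ : ℕ∞) φ ∧ HasCompactSupport φ ∧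
      (∃ U : Set (Euc N), IsOpen U ∧ A ⊆ U ∧ ∀ x ∈ U, 1 ≤ φ x) ∧
      c = (∫ x, φ x ^ (q / (q - 1))) +
          ∫ x, ∫ y, |φ x - φ y| ^ (q / (q - 1)) / ‖x - y‖ ^ ((N : ℝ) + 2 / (q - 1)) }

/-- The spherical shell piece `F_n` of `F` around `x` at time `t`. -/
def shell (N : ℕ) (F : Set (Euc N)) (x : Euc N) (t : ℝ) (n : ℕ) : Set (Euc N) :=
  {y | y ∈ F ∧ Real.sqrt ((n : ℝ) * t) ≤ dist x y ∧ dist x y ≤ Real.sqrt (((n : ℝ) + 1) * t)}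

/-- The parabolic capacitary potential `W_F`. -/
def Wpot (N : ℕ) (q : ℝ) (F : Set (Euc N)) (x : Euc N) (t : ℝ) : ℝ :=
  t ^ (-(N : ℝ) / 2) *
    ∑' n : ℕ,
      Real.sqrt (((n : ℝ) + 1) * t) ^ ((N : ℝ) - 2 / (q - 1)) * Real.exp (-(n : ℝ) / 4) *
        capQ N q ((fun y => (Real.sqrt (((n : ℝ) + 1) * t))⁻¹ • y) '' shell N F x t n)

/-- `u` is a positive solution of `∂ₜu - Δu + u^q = 0` in `Q_∞` whose initial
trace vanishes outside the closed set `F`. -/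
def IsSol (N : ℕ) (q : ℝ) (u : Euc N → ℝ → ℝ) (F : Set (Euc N)) : Prop :=
  ContDiffOn ℝ 2 (fun p : Euc N × ℝ => u p.1 p.2) (Set.univ ×ˢ Set.Ioi (0 : ℝ)) ∧
  (∀ x t, 0 < t → 0 < u x t) ∧
  (∀ x t, 0 < t → deriv (u x) t - lapl (fun y => u y t) x + u x t ^ q = 0) ∧
  (∀ E : Set (Euc N), IsCompact E → E ⊆ Fᶜ →
    Tendsto (fun t => sSup ((fun x => u x t) '' E)) (nhdsWithin 0 (Set.Ioi 0)) (nhds 0))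

/-- The heat potential of a function. -/
def heatPot (N : ℕ) (η : Euc N → ℝ) (x : Euc N) (t : ℝ) : ℝ :=
  ∫ y, (4 * π * t) ^ (-(N : ℝ) / 2) * Real.exp (-‖x - y‖ ^ 2 / (4 * t)) * η y

/-- The heat potential of a measure. -/
def heatPotM (N : ℕ) (μ : Measure (Euc N)) (x : Euc N) (t : ℝ) : ℝ :=
  ∫ y, (4 * π * t) ^ (-(N : ℝ) / 2) * Real.exp (-‖x - y‖ ^ 2 / (4 * t)) ∂μ

/-- The class `𝒯_{r,ρ}(K)` of test functions. -/
def TestFun (N : ℕ) (r ρ : ℝ) (K : Set (Euc N)) (η : Euc N → ℝ) : Prop :=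
  ContDiff ℝ (⊤ : ℕ∞) η ∧ HasCompactSupport η ∧ tsupport η ⊆ Metric.ball (0 : Euc N) (r + ρ) ∧
  (∀ x, 0 ≤ η x ∧ η x ≤ 1) ∧ (∀ x ∈ K, η x = 1)

/-- `‖R[η]‖_{L^{q'}}^{q'} = ∬_{Q_∞} (|∇ℍ[η]|² + |∂ₜℍ[η]|)^{q'} dx dt`. -/
def Rnorm (N : ℕ) (q : ℝ) (η : Euc N → ℝ) : ℝ :=
  ∫ t in Set.Ioi (0 : ℝ), ∫ x,
    (‖fderiv ℝ (fun y => heatPot N η y t) x‖ ^ 2 +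
      |deriv (fun τ => heatPot N η x τ) t|) ^ (q / (q - 1))

/-- The set of values `∫ η dμ` over test functions `η` with
`‖η‖_{L^{q'}} + ‖η‖_{Ḃ^{2/q,q'}} ≤ 1`; `‖μ‖_*` is its supremum. -/
def dualSet (N : ℕ) (q : ℝ) (μ : Measure (Euc N)) : Set ℝ :=
  { r : ℝ | ∃ η : Euc N → ℝ, ContDiff ℝ (⊤ : ℕ∞) η ∧ HasCompactSupport η ∧
      ((∫ x, |η x| ^ (q / (q - 1))) ^ ((q - 1) / q) +
          (∫ x, ∫ y, |η x - η y| ^ (q / (q - 1)) / ‖x - y‖ ^ ((N : ℝ) + 2 / (q - 1))) ^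
            ((q - 1) / q) ≤ 1) ∧
      r = ∫ x, η x ∂μ }

lemma aux_1d {f : ℝ → ENNReal} {A B α β ρ : ℝ} (hρ : 0 < ρ) (hA : 0 ≤ A) (hB : 0 ≤ B)
    (hα : -1 < α) (hβ : β < -1)
    (h1 : ∀ t, 0 < t → t ≤ ρ → f t ≤ ENNReal.ofReal (A * t ^ α))
    (h2 : ∀ t, ρ < t → f t ≤ ENNReal.ofReal (B * t ^ β)) :
    ∫⁻ t in Ioi (0:ℝ), f t ≤
      ENNReal.ofReal (A * (ρ ^ (α + 1) / (α + 1)) + B * (ρ ^ (β + 1) / (-β - 1))) := by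
  have hu : Ioi (0:ℝ) = Ioc 0 ρ ∪ Ioi ρ := (Ioc_union_Ioi_eq_Ioi hρ.le).symm
  have i1 : IntegrableOn (fun t : ℝ => A * t ^ α) (Ioc 0 ρ) := by
    have := (intervalIntegral.intervalIntegrable_rpow' (a := 0) (b := ρ) hα).const_mul A
    rwa [intervalIntegrable_iff_integrableOn_Ioc_of_le hρ.le] at this
  have i2 : IntegrableOn (fun t : ℝ => B * t ^ β) (Ioi ρ) :=
    (integrableOn_Ioi_rpow_of_lt hβ hρ).const_mul B
  calc ∫⁻ t in Ioi (0:ℝ), f t ≤ (∫⁻ t in Ioc 0 ρ, f t) + ∫⁻ t in Ioi ρ, f t := by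
        rw [hu]; exact lintegral_union_le _ _ _
    _ ≤ (∫⁻ t in Ioc 0 ρ, ENNReal.ofReal (A * t ^ α)) +
        ∫⁻ t in Ioi ρ, ENNReal.ofReal (B * t ^ β) := by
        exact add_le_add (setLIntegral_mono' measurableSet_Ioc fun t ht => h1 t ht.1 ht.2)
          (setLIntegral_mono' measurableSet_Ioi fun t ht => h2 t ht)
    _ = _ := by
        rw [← ofReal_integral_eq_lintegral_ofReal i1, ← ofReal_integral_eq_lintegral_ofReal i2,
          ← ENNReal.ofReal_add]
        · congr 1
          rw [integral_const_mul, integral_const_mul, integral_Ioi_rpow_of_lt hβ hρ,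
            ← intervalIntegral.integral_of_le hρ.le, integral_rpow (Or.inl hα),
            zero_rpow (by linarith), sub_zero]
          congr 2
          rw [neg_div, ← div_neg]; congr 1; ring
        · exact setIntegral_nonneg measurableSet_Ioc fun t ht =>
            mul_nonneg hA (rpow_nonneg ht.1.le _)
        · exact setIntegral_nonneg measurableSet_Ioi fun t ht =>
            mul_nonneg hB (rpow_nonneg (hρ.trans ht).le _)
        · filter_upwards [ae_restrict_mem measurableSet_Ioi] with t ht
          exact mul_nonneg hB (rpow_nonneg (hρ.trans ht).le _)
        · filter_upwards [ae_restrict_mem measurableSet_Ioc] with t ht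
          exact mul_nonneg hA (rpow_nonneg ht.1.le _)

/-- radial integral -/
lemma aux_radial (N : ℕ) (hN : 1 ≤ N) {m γ : ℝ} (hγ : 0 < γ) (hm : γ < m) :
    ∃ C : ℝ, 0 < C ∧ ∀ ρ : ℝ, 0 < ρ →
      ∫⁻ h : Euc N, ENNReal.ofReal ((min 1 (‖h‖ / ρ)) ^ m * ‖h‖ ^ (-((N:ℝ) + γ))) ≤
        ENNReal.ofReal (C * ρ ^ (-γ)) := by
  have : Nonempty (Fin N) := ⟨⟨0, hN⟩⟩
  set V : ℝ := (volume : Measure (Euc N)).real (ball 0 1)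
  have hV : 0 < V := ENNReal.toReal_pos (measure_ball_pos _ _ one_pos).ne' measure_ball_lt_top.ne
  have hm0 : 0 < m := hγ.trans hm
  refine ⟨N * V * (1 / (m - γ) + 1 / γ), by
    have : 0 < m - γ := by linarith
    positivity, fun ρ hρ => ?_⟩
  set f : ℝ → ℝ := fun r => (min 1 (r / ρ)) ^ m * r ^ (-((N:ℝ) + γ)) with hf
  have hfm : Measurable f := by fun_prop
  have hfn : ∀ r, 0 ≤ r → 0 ≤ f r := fun r hr => by
    have : 0 ≤ min 1 (r / ρ) := le_min zero_le_one (by positivity)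
    simp only [hf]; positivity
  have e1 : ∀ r : ℝ, 0 < r → r ^ (N - 1) * r ^ (-((N:ℝ) + γ)) = r ^ (-1 - γ) := fun r hr => by
    rw [← rpow_natCast, ← rpow_add hr, Nat.cast_sub hN]; congr 1; push_cast; ring
  have key : ∫⁻ r in Ioi (0:ℝ), ENNReal.ofReal (r ^ (N - 1) • f r) ≤
      ENNReal.ofReal ((1 / (m - γ) + 1 / γ) * ρ ^ (-γ)) := by
    refine (aux_1d (A := ρ ^ (-m)) (B := 1) (α := m - 1 - γ) (β := -1 - γ) hρ (by positivity)
      zero_le_one (by linarith) (by linarith) ?_ ?_).trans (le_of_eq ?_)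
    · intro r hr hr2
      apply ENNReal.ofReal_le_ofReal
      have : min 1 (r / ρ) = r / ρ := min_eq_right ((div_le_one hρ).2 hr2)
      simp only [hf, smul_eq_mul, this]
      rw [mul_left_comm, e1 r hr, div_rpow hr.le hρ.le, rpow_neg hρ.le, div_mul_eq_mul_div,
        ← rpow_add hr, div_eq_inv_mul]
      apply le_of_eq; congr 2; ring
    · intro r hr
      apply ENNReal.ofReal_le_ofReal
      have h0 := hρ.trans hr
      have : min 1 (r / ρ) = 1 := min_eq_left ((one_le_div hρ).2 hr.le)
      simp only [hf, smul_eq_mul, this, one_rpow, one_mul]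
      rw [e1 r h0]
    · congr 1
      have a1 : ρ ^ (-m) * (ρ ^ (m - 1 - γ + 1) / (m - 1 - γ + 1)) = ρ ^ (-γ) / (m - γ) := by
        rw [← mul_div_assoc, ← rpow_add hρ, show -m + (m - 1 - γ + 1) = -γ by ring,
          show m - 1 - γ + 1 = m - γ by ring]
      have a2 : -1 - γ + 1 = -γ := by ring
      have a3 : -(-1 - γ) - 1 = γ := by ring
      rw [a1, a2, a3]; ring
  have hint : IntegrableOn (fun r : ℝ => r ^ (N - 1) • f r) (Ioi 0) := by
    refine ⟨by fun_prop, ?_⟩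
    rw [hasFiniteIntegral_iff_ofReal]
    · exact key.trans_lt ENNReal.ofReal_lt_top
    · filter_upwards [ae_restrict_mem measurableSet_Ioi] with r hr
      exact smul_nonneg (pow_nonneg (le_of_lt hr) _) (hfn r (le_of_lt hr))
  have hfr : Module.finrank ℝ (Euc N) = N := by simp
  have hint2 : Integrable (fun h : Euc N => f ‖h‖) := by
    rw [integrable_fun_norm_addHaar, hfr]; exact hint
  change ∫⁻ h : Euc N, ENNReal.ofReal (f ‖h‖) ≤ _
  rw [← ofReal_integral_eq_lintegral_ofReal hint2 (Eventually.of_forall fun h => hfn _ (norm_nonneg _)),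
    integral_fun_norm_addHaar, hfr]
  apply ENNReal.ofReal_le_ofReal
  have hle : ∫ r in Ioi (0:ℝ), r ^ (N - 1) • f r ≤ (1 / (m - γ) + 1 / γ) * ρ ^ (-γ) := by
    rw [integral_eq_lintegral_of_nonneg_ae _ hint.1]
    · apply ENNReal.toReal_le_of_le_ofReal _ key
      have : 0 < m - γ := by linarith
      positivity
    · filter_upwards [ae_restrict_mem measurableSet_Ioi] with r hr
      exact smul_nonneg (pow_nonneg (le_of_lt hr) _) (hfn r (le_of_lt hr))
  rw [nsmul_eq_mul, smul_eq_mul, mul_assoc, mul_assoc]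
  gcongr

def gk (N : ℕ) (t : ℝ) (z : Euc N) : ℝ :=
  (4 * π * t) ^ (-(N : ℝ) / 2) * Real.exp (-‖z‖ ^ 2 / (4 * t))

lemma gk_pos (N : ℕ) {t : ℝ} (ht : 0 < t) (z : Euc N) : 0 < gk N t z := by
  unfold gk; positivity

lemma gk_neg (N : ℕ) (t : ℝ) (z : Euc N) : gk N t (-z) = gk N t z := by simp [gk]

lemma gk_sub_comm (N : ℕ) (t : ℝ) (x y : Euc N) : gk N t (x - y) = gk N t (y - x) := by
  simp [gk, norm_sub_rev]

lemma gk_meas (N : ℕ) : Measurable (fun v : ℝ × Euc N => gk N v.1 v.2) := by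
  unfold gk; fun_prop

lemma gk_cont (N : ℕ) (t : ℝ) : Continuous (fun z : Euc N => gk N t z) := by
  unfold gk; fun_prop

lemma gk_le (N : ℕ) {t : ℝ} (ht : 0 < t) (z : Euc N) : gk N t z ≤ (4 * π * t) ^ (-(N : ℝ) / 2) := by
  unfold gk
  apply mul_le_of_le_one_right (by positivity)
  rw [exp_le_one_iff, neg_div]
  have : 0 ≤ ‖z‖^2 / (4*t) := by positivity
  linarith

lemma lint_gauss (N : ℕ) {b : ℝ} (hb : 0 < b) :
    ∫⁻ z : Euc N, ENNReal.ofReal (rexp (-b * ‖z‖ ^ 2)) = ENNReal.ofReal ((π / b) ^ ((N:ℝ) / 2)) := by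
  have h := GaussianFourier.integral_rexp_neg_mul_sq_norm (V := Euc N) hb
  have hfr : Module.finrank ℝ (Euc N) = N := by simp
  rw [hfr] at h
  rw [← h, ofReal_integral_eq_lintegral_ofReal]
  · by_contra hc
    rw [integral_undef hc] at h
    have : 0 < (π / b) ^ ((N:ℝ) / 2) := by positivity
    linarith
  · exact Eventually.of_forall fun x => (exp_pos _).le

lemma lint_gk (N : ℕ) {t : ℝ} (ht : 0 < t) : ∫⁻ z : Euc N, ENNReal.ofReal (gk N t z) = 1 := by
  have : ∀ z : Euc N, ENNReal.ofReal (gk N t z) = ENNReal.ofReal ((4 * π * t) ^ (-(N : ℝ) / 2)) *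
      ENNReal.ofReal (rexp (-(1 / (4 * t)) * ‖z‖ ^ 2)) := fun z => by
    rw [← ENNReal.ofReal_mul (by positivity)]; unfold gk; congr 3; field_simp
  simp_rw [this]
  rw [lintegral_const_mul _ (by fun_prop), lint_gauss N (by positivity),
    ← ENNReal.ofReal_mul (by positivity)]
  rw [show π / (1 / (4 * t)) = 4 * π * t by field_simp, ← rpow_add (by positivity)]
  simp [neg_div]

lemma lint_gk_sub (N : ℕ) {t : ℝ} (ht : 0 < t) (x : Euc N) :
    ∫⁻ y : Euc N, ENNReal.ofReal (gk N t (x - y)) = 1 := by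
  rw [lintegral_sub_left_eq_self (fun z => ENNReal.ofReal (gk N t z)) x]
  exact lint_gk N ht

lemma lint_gk_sub' (N : ℕ) {t : ℝ} (ht : 0 < t) (x : Euc N) :
    ∫⁻ y : Euc N, ENNReal.ofReal (gk N t (y - x)) = 1 := by
  simp_rw [gk_sub_comm N t _ x]; exact lint_gk_sub N ht x

lemma gk_semigroup (N : ℕ) {s t : ℝ} (hs : 0 < s) (ht : 0 < t) (x y : Euc N) :
    ∫⁻ w : Euc N, ENNReal.ofReal (gk N s (x - w)) * ENNReal.ofReal (gk N t (w - y)) =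
      ENNReal.ofReal (gk N (s + t) (x - y)) := by
  set m : Euc N := (t / (s + t)) • x + (s / (s + t)) • y with hm
  have hst : 0 < s + t := by positivity
  have key : ∀ w : Euc N, gk N s (x - w) * gk N t (w - y) =
      gk N (s + t) (x - y) * gk N (s * t / (s + t)) (w - m) := fun w => by
    have e1 : -‖x - w‖ ^ 2 / (4 * s) + -‖w - y‖ ^ 2 / (4 * t) =
        -‖x - y‖ ^ 2 / (4 * (s + t)) + -‖w - m‖ ^ 2 / (4 * (s * t / (s + t))) := by
      have h1 : x - y = (x - w) + (w - y) := by abel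
      have h2 : w - m = (-(t / (s + t))) • (x - w) + (s / (s + t)) • (w - y) := by
        have : (t / (s + t)) + (s / (s + t)) = 1 := by field_simp; ring
        have h3 : w = (t / (s + t)) • w + (s / (s + t)) • w := by rw [← add_smul, this, one_smul]
        rw [hm]; nth_rewrite 1 [h3]; module
      rw [h1, h2]
      generalize x - w = a
      generalize w - y = b
      rw [norm_add_sq_real, norm_add_sq_real, norm_smul, norm_smul, inner_smul_left,
        inner_smul_right, mul_pow, mul_pow]
      simp only [norm_eq_abs, sq_abs, conj_trivial]
      field_simp
      ring
    unfold gk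
    rw [mul_mul_mul_comm ((4 * π * s) ^ _), mul_mul_mul_comm ((4 * π * (s + t)) ^ _), ← exp_add, ← exp_add, e1]
    congr 1
    rw [← mul_rpow (by positivity) (by positivity), ← mul_rpow (by positivity) (by positivity)]
    congr 1; field_simp
  have : ∀ w : Euc N, ENNReal.ofReal (gk N s (x - w)) * ENNReal.ofReal (gk N t (w - y)) =
      ENNReal.ofReal (gk N (s + t) (x - y)) * ENNReal.ofReal (gk N (s * t / (s + t)) (w - m)) :=
    fun w => by
      rw [← ENNReal.ofReal_mul (gk_pos N hs _).le, key, ENNReal.ofReal_mul (gk_pos N hst _).le]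
  simp_rw [this]
  rw [lintegral_const_mul, lint_gk_sub' N (by positivity), mul_one]
  exact ((gk_cont N _).measurable.comp (by fun_prop)).ennreal_ofReal

lemma gk_compare (N : ℕ) {τ u : ℝ} (hτ : 0 < τ) (h1 : τ ≤ u) (h2 : u ≤ 7 * τ) (z : Euc N) :
    gk N u z ≤ 7 ^ ((N:ℝ) / 2) * gk N (7 * τ) z := by
  have hu : 0 < u := by linarith
  unfold gk
  rw [← mul_assoc]
  gcongr ?_ * rexp ?_
  · have : (7:ℝ) ^ ((N:ℝ)/2) * (4 * π * (7 * τ)) ^ (-(N:ℝ) / 2) = (4 * π * τ) ^ (-(N:ℝ) / 2) := by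
      rw [show 4 * π * (7 * τ) = 7 * (4 * π * τ) by ring, mul_rpow (by positivity) (by positivity),
        ← mul_assoc, ← rpow_add (by positivity)]
      simp [neg_div]
    rw [this]
    apply rpow_le_rpow_of_nonpos (by positivity)
    · gcongr
    · have : (0:ℝ) ≤ N := by positivity
      linarith
  · rw [neg_div, neg_div, neg_le_neg_iff]
    gcongr

lemma exp_diff {α β δ : ℝ} (hα : 0 ≤ α) (hab : α ≤ β) (hδ : β - α ≤ δ / 2) (hδ1 : δ ≤ 1) :
    |rexp (-α ^ 2) - rexp (-β ^ 2)| ≤ δ * (rexp (-(α ^ 2 / 2))) := by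
  have hδ0 : 0 ≤ δ := by linarith
  have h1 : rexp (-β ^ 2) ≤ rexp (-α ^ 2) := exp_le_exp.2 (by nlinarith)
  rw [abs_of_nonneg (by linarith)]
  have h2 : rexp (-β ^ 2) = rexp (-α ^ 2) * rexp (-(β ^ 2 - α ^ 2)) := by
    rw [← exp_add]; congr 1; ring
  have h3 := add_one_le_exp (-(β ^ 2 - α ^ 2))
  have h4 : rexp (-α ^ 2) = rexp (-(α ^ 2 / 2)) * rexp (-(α ^ 2 / 2)) := by
    rw [← exp_add]; congr 1; ring
  have h5 : (1 + α ^ 2 / 2) * rexp (-(α ^ 2 / 2)) ≤ 1 := by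
    have := add_one_le_exp (α ^ 2 / 2)
    calc _ ≤ rexp (α ^ 2 / 2) * rexp (-(α ^ 2 / 2)) := by gcongr; linarith
      _ = 1 := by rw [← exp_add]; simp
  have h6 : β ^ 2 - α ^ 2 ≤ δ * (1 + α ^ 2 / 2) := by
    have : β ^ 2 - α ^ 2 = (β - α) * (β + α) := by ring
    rw [this]
    calc _ ≤ δ / 2 * (2 * α + 1 / 2) := mul_le_mul hδ (by linarith) (by linarith) (by linarith)
      _ ≤ δ * (1 + α ^ 2 / 2) := by nlinarith [mul_nonneg hδ0 (sq_nonneg (α - 1))]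
  have hp := exp_pos (-(α ^ 2 / 2))
  calc rexp (-α ^ 2) - rexp (-β ^ 2) ≤ rexp (-α ^ 2) * (β ^ 2 - α ^ 2) := by
        rw [h2]; nlinarith [exp_pos (-α ^ 2)]
    _ ≤ rexp (-α ^ 2) * (δ * (1 + α ^ 2 / 2)) := by gcongr
    _ = δ * rexp (-(α ^ 2 / 2)) * ((1 + α ^ 2 / 2) * rexp (-(α ^ 2 / 2))) := by rw [h4]; ring
    _ ≤ δ * rexp (-(α ^ 2 / 2)) * 1 := by gcongr
    _ = _ := mul_one _

lemma gk_diff (N : ℕ) {t : ℝ} (ht : 0 < t) (z h : Euc N) (hh : ‖h‖ / √t ≤ 1) :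
    |gk N t (z + h) - gk N t z| ≤
      (‖h‖ / √t) * (2 ^ ((N:ℝ) / 2) * (gk N (2 * t) (z + h) + gk N (2 * t) z)) := by
  have hs : 0 < √t := sqrt_pos.2 ht
  have hst : √t ^ 2 = t := sq_sqrt ht.le
  have e1 : ∀ z : Euc N, gk N t z = (4 * π * t) ^ (-(N : ℝ) / 2) * rexp (-(‖z‖ / (2 * √t)) ^ 2) := by
    intro z; unfold gk; congr 2; rw [div_pow, mul_pow, hst]; ring
  have e2 : ∀ z : Euc N, 2 ^ ((N:ℝ) / 2) * gk N (2 * t) z =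
      (4 * π * t) ^ (-(N : ℝ) / 2) * rexp (-((‖z‖ / (2 * √t)) ^ 2 / 2)) := by
    intro z; unfold gk
    rw [show 4 * π * (2 * t) = 2 * (4 * π * t) by ring, mul_rpow (by positivity) (by positivity),
        ← mul_assoc, ← mul_assoc, ← rpow_add (by positivity)]
    have : (N:ℝ) / 2 + -N / 2 = 0 := by ring
    rw [this, rpow_zero, one_mul]
    congr 2; rw [div_pow, mul_pow, hst]; ring
  rw [mul_add, e1, e1, e2, e2, ← mul_sub, ← mul_add, abs_mul, abs_of_nonneg (by positivity), mul_left_comm]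
  gcongr
  have t1 : ‖z + h‖ ≤ ‖z‖ + ‖h‖ := norm_add_le _ _
  have t2 : ‖z‖ ≤ ‖z + h‖ + ‖h‖ := by simpa using norm_sub_le (z + h) h
  rcases le_total ‖z + h‖ ‖z‖ with hc | hc
  · refine (exp_diff (δ := ‖h‖ / √t) (by positivity) (by gcongr) ?_ hh).trans ?_
    · rw [← sub_div, div_div, mul_comm 2]; gcongr; linarith
    · gcongr; linarith [exp_pos (-((‖z‖ / (2 * √t)) ^ 2 / 2))]
  · rw [abs_sub_comm]
    refine (exp_diff (δ := ‖h‖ / √t) (by positivity) (by gcongr) ?_ hh).trans ?_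
    · rw [← sub_div, div_div, mul_comm 2]; gcongr; linarith
    · gcongr; linarith [exp_pos (-((‖z + h‖ / (2 * √t)) ^ 2 / 2))]

/-- L1 modulus of continuity. -/
lemma gk_modulus (N : ℕ) : ∃ C : ℝ, 0 < C ∧ ∀ t : ℝ, 0 < t → ∀ h : Euc N,
    ∫⁻ z : Euc N, ENNReal.ofReal |gk N t (z + h) - gk N t z| ≤
      ENNReal.ofReal (C * min 1 (‖h‖ / √t)) := by
  refine ⟨2 ^ ((N:ℝ) / 2) * 2, by positivity, fun t ht h => ?_⟩
  have hm : ∀ s, Measurable fun z : Euc N => ENNReal.ofReal (gk N s z) := fun s =>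
    (gk_cont N s).measurable.ennreal_ofReal
  have htr : ∀ s, 0 < s → ∫⁻ z : Euc N, ENNReal.ofReal (gk N s (z + h)) = 1 := fun s hs => by
    rw [lintegral_add_right_eq_self (fun z => ENNReal.ofReal (gk N s z)) h, lint_gk N hs]
  rcases le_total (‖h‖ / √t) 1 with hh | hh
  · rw [min_eq_right hh]
    calc _ ≤ ∫⁻ z : Euc N, ENNReal.ofReal (‖h‖ / √t * 2 ^ ((N:ℝ) / 2)) *
          (ENNReal.ofReal (gk N (2 * t) (z + h)) + ENNReal.ofReal (gk N (2 * t) z)) := by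
          gcongr with z
          rw [← ENNReal.ofReal_add (gk_pos N (by positivity) _).le (gk_pos N (by positivity) _).le,
            ← ENNReal.ofReal_mul (by positivity), mul_assoc]
          exact ENNReal.ofReal_le_ofReal (gk_diff N ht z h hh)
      _ = ENNReal.ofReal (‖h‖ / √t * 2 ^ ((N:ℝ) / 2)) * (1 + 1) := by
          have h2t : 0 < 2 * t := by positivity
          have hm2 : Measurable fun z : Euc N => ENNReal.ofReal (gk N (2 * t) (z + h)) +
              ENNReal.ofReal (gk N (2 * t) z) :=
            ((hm (2 * t)).comp (measurable_id.add_const h)).add (hm (2 * t))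
          rw [lintegral_const_mul _ hm2,
            lintegral_add_right _ (hm _), htr _ h2t, lint_gk N h2t]
      _ = _ := by
          have : (1 + 1 : ENNReal) = ENNReal.ofReal 2 := by rw [one_add_one_eq_two]; simp
          rw [this, ← ENNReal.ofReal_mul (by positivity)]
          congr 1; ring
  · rw [min_eq_left hh]
    calc _ ≤ ∫⁻ z : Euc N, (ENNReal.ofReal (gk N t (z + h)) + ENNReal.ofReal (gk N t z)) := by
          gcongr with z
          rw [← ENNReal.ofReal_add (gk_pos N ht _).le (gk_pos N ht _).le]
          apply ENNReal.ofReal_le_ofReal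
          refine (abs_sub _ _).trans ?_
          rw [abs_of_pos (gk_pos N ht _), abs_of_pos (gk_pos N ht _)]
      _ = ENNReal.ofReal 2 := by
          rw [lintegral_add_right _ (hm _), htr _ ht, lint_gk N ht, one_add_one_eq_two]; simp
      _ ≤ _ := by
          apply ENNReal.ofReal_le_ofReal
          have : (1:ℝ) ≤ 2 ^ ((N:ℝ) / 2) := one_le_rpow (by norm_num) (by positivity)
          linarith

lemma holder_w {α : Type*} [MeasurableSpace α] (ν : Measure α) {p : ℝ} (hp : 1 < p)
    {K F W : α → ENNReal} (hK : AEMeasurable K ν) (hF : AEMeasurable F ν) (hW : AEMeasurable W ν)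
    (hW0 : ∀ᵐ v ∂ν, W v ≠ 0) (hWt : ∀ᵐ v ∂ν, W v ≠ ⊤) :
    (∫⁻ v, K v * F v ∂ν) ^ p ≤
      (∫⁻ v, K v * W v ∂ν) ^ (p - 1) * ∫⁻ v, K v * (F v ^ p * W v ^ (1 - p)) ∂ν := by
  have hp0 : 0 < p := by linarith
  set q := p / (p - 1) with hq
  have hp1 : 0 < p - 1 := by linarith
  have hpq : p.HolderConjugate q := Real.HolderConjugate.conjExponent hp
  have hq0 : 0 < q := by positivity
  have h1 : ∫⁻ v, K v * F v ∂ν = ∫⁻ v, (((fun v => (K v * (F v ^ p * W v ^ (1 - p))) ^ (1 / p)) *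
      fun v => (K v * W v) ^ (1 / q)) : α → ENNReal) v ∂ν := by
    apply lintegral_congr_ae
    filter_upwards [hW0, hWt] with v h0 ht
    have hpp : 0 ≤ 1 / p := by positivity
    have hqq : 0 ≤ 1 / q := by positivity
    simp only [Pi.mul_apply]
    rw [ENNReal.mul_rpow_of_nonneg _ _ hpp, ENNReal.mul_rpow_of_nonneg _ _ hpp,
      ENNReal.mul_rpow_of_nonneg _ _ hqq, ← ENNReal.rpow_mul, ← ENNReal.rpow_mul,
      mul_mul_mul_comm, ← ENNReal.rpow_add_of_nonneg _ _ hpp hqq, mul_assoc, 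
      ← ENNReal.rpow_add _ _ h0 ht]
    have e1 : 1 / p + 1 / q = 1 := by simpa using hpq.inv_add_inv_eq_one
    have e2 : (1 - p) * (1 / p) + 1 / q = 0 := by
      have : p * (1 / p) = 1 := by field_simp
      linear_combination e1 - this
    have e3 : p * (1 / p) = 1 := by field_simp
    rw [e1, e2, e3]; simp
  have h2 := ENNReal.lintegral_mul_le_Lp_mul_Lq ν hpq
    (f := fun v => (K v * (F v ^ p * W v ^ (1 - p))) ^ (1 / p))
    (g := fun v => (K v * W v) ^ (1 / q)) (by fun_prop) (by fun_prop)
  rw [← h1] at h2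
  simp_rw [← ENNReal.rpow_mul] at h2
  have e3 : 1 / p * p = 1 := by field_simp
  have e4 : 1 / q * q = 1 := by field_simp
  simp_rw [e3, e4, ENNReal.rpow_one] at h2
  calc _ ≤ _ := ENNReal.rpow_le_rpow h2 hp0.le
    _ = _ := by
      rw [ENNReal.mul_rpow_of_nonneg _ _ hp0.le, ← ENNReal.rpow_mul, ← ENNReal.rpow_mul, e3,
        ENNReal.rpow_one, mul_comm]
      congr 2
      rw [hq]; field_simp

lemma jensen_w {α : Type*} [MeasurableSpace α] (ν : Measure α) {p : ℝ} (hp : 1 < p)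
    {K F : α → ENNReal} (hK : AEMeasurable K ν) (hF : AEMeasurable F ν) :
    (∫⁻ v, K v * F v ∂ν) ^ p ≤ (∫⁻ v, K v ∂ν) ^ (p - 1) * ∫⁻ v, K v * F v ^ p ∂ν := by
  simpa using holder_w ν hp hK hF (W := fun _ => 1) (by fun_prop) (by simp) (by simp)

lemma schur {U V : Type*} [MeasurableSpace U] [MeasurableSpace V] (μ : Measure U) (ν : Measure V)
    [SFinite μ] [SFinite ν] {p : ℝ} (hp : 1 < p) {K : U → V → ENNReal} {F W : V → ENNReal}
    {g d : U → ENNReal} (hK : Measurable (Function.uncurry K)) (hF : Measurable F)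
    (hW : Measurable W) (hg : Measurable g) (hd : Measurable d)
    (hW0 : ∀ᵐ v ∂ν, W v ≠ 0) (hWt : ∀ᵐ v ∂ν, W v ≠ ⊤) {C1 C2 : ENNReal}
    (h1 : ∀ᵐ u ∂μ, ∫⁻ v, K u v * W v ∂ν ≤ C1 * g u)
    (h2 : ∀ᵐ v ∂ν, ∫⁻ u, K u v * (g u ^ (p - 1) * d u) ∂μ ≤ C2 * W v ^ (p - 1)) :
    ∫⁻ u, d u * (∫⁻ v, K u v * F v ∂ν) ^ p ∂μ ≤ C1 ^ (p - 1) * C2 * ∫⁻ v, F v ^ p ∂ν := by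
  have hp1 : 0 ≤ p - 1 := by linarith
  have hKu : ∀ u, Measurable (K u) := fun u => hK.of_uncurry_left
  have hKv : ∀ v, Measurable fun u => K u v := fun v => hK.of_uncurry_right
  calc ∫⁻ u, d u * (∫⁻ v, K u v * F v ∂ν) ^ p ∂μ
      ≤ ∫⁻ u, ∫⁻ v, C1 ^ (p - 1) * (K u v * (g u ^ (p - 1) * d u) *
          (F v ^ p * W v ^ (1 - p))) ∂ν ∂μ := by
        apply lintegral_mono_ae
        filter_upwards [h1] with u hu
        have a1 := holder_w ν hp (hKu u).aemeasurable hF.aemeasurable hW.aemeasurable hW0 hWt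
        calc _ ≤ d u * ((C1 * g u) ^ (p - 1) * ∫⁻ v, K u v * (F v ^ p * W v ^ (1 - p)) ∂ν) := by
              gcongr
              exact a1.trans (by gcongr)
          _ = (C1 ^ (p - 1) * (g u ^ (p - 1) * d u)) * ∫⁻ v, K u v * (F v ^ p * W v ^ (1 - p)) ∂ν := by
              rw [ENNReal.mul_rpow_of_nonneg _ _ hp1]; ring
          _ = _ := by
              have := hKu u
              rw [← lintegral_const_mul _ (by fun_prop)]
              congr 1; ext v; ring
    _ = ∫⁻ v, ∫⁻ u, C1 ^ (p - 1) * (K u v * (g u ^ (p - 1) * d u) *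
          (F v ^ p * W v ^ (1 - p))) ∂μ ∂ν := by
        apply lintegral_lintegral_swap
        apply Measurable.aemeasurable
        have : Measurable fun x : U × V => K x.1 x.2 := hK
        change Measurable fun x : U × V => C1 ^ (p - 1) * (K x.1 x.2 * (g x.1 ^ (p - 1) * d x.1) *
          (F x.2 ^ p * W x.2 ^ (1 - p)))
        fun_prop
    _ ≤ ∫⁻ v, C1 ^ (p - 1) * C2 * F v ^ p ∂ν := by
        apply lintegral_mono_ae
        filter_upwards [h2, hW0, hWt] with v hv h0 ht
        have := hKv v
        rw [lintegral_const_mul _ (by fun_prop), lintegral_mul_const _ (by fun_prop),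
          mul_assoc (C1 ^ (p - 1))]
        refine mul_le_mul' le_rfl ?_
        calc _ ≤ C2 * W v ^ (p - 1) * (F v ^ p * W v ^ (1 - p)) := by gcongr
          _ = C2 * (F v ^ p) * (W v ^ (p - 1) * W v ^ (1 - p)) := by ring
          _ = _ := by rw [← ENNReal.rpow_add _ _ h0 ht]; simp
    _ = _ := lintegral_const_mul _ (by fun_prop)

lemma aux_time {b : ℝ} (hb1 : 1 / 2 < b) (hb2 : b < 1) :
    ∃ C : ℝ, 0 < C ∧ ∀ r : ℝ, 0 < r →
      ∫⁻ t in Ioi (0:ℝ), ENNReal.ofReal (min 1 (r / √t) * t ^ (-b)) ≤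
        ENNReal.ofReal (C * r ^ (2 - 2 * b)) := by
  refine ⟨1 / (1 - b) + 1 / (b - 1 / 2), by
    have : 0 < 1 - b := by linarith
    have : 0 < b - 1 / 2 := by linarith
    positivity, fun r hr => ?_⟩
  refine (aux_1d (A := 1) (B := r) (α := -b) (β := -b - 1 / 2) (ρ := r ^ 2) (by positivity)
      zero_le_one hr.le (by linarith) (by linarith) ?_ ?_).trans (le_of_eq ?_)
  · intro t ht _
    apply ENNReal.ofReal_le_ofReal
    gcongr
    exact min_le_left _ _
  · intro t ht
    have ht0 : 0 < t := lt_trans (by positivity) ht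
    apply ENNReal.ofReal_le_ofReal
    calc _ ≤ r / √t * t ^ (-b) := by gcongr; exact min_le_right _ _
      _ = _ := by
        rw [sqrt_eq_rpow, div_eq_mul_inv, ← rpow_neg ht0.le, mul_assoc, ← rpow_add ht0]
        congr 2; ring
  · congr 1
    have e1 : (r ^ 2) ^ (-b + 1) = r ^ (2 - 2 * b) := by
      rw [← rpow_natCast, ← rpow_mul hr.le]; congr 1; push_cast; ring
    have e2 : r * (r ^ 2) ^ (-b - 1 / 2 + 1) = r ^ (2 - 2 * b) := by
      rw [← rpow_natCast, ← rpow_mul hr.le]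
      nth_rewrite 1 [← rpow_one r]
      rw [← rpow_add hr]; congr 1; push_cast; ring
    rw [← mul_div_assoc, ← mul_div_assoc, e2, e1, one_mul, add_mul, one_div_mul_eq_div,
      one_div_mul_eq_div]
    congr 2 <;> ring

/-- Measure on the time-space strip. -/
def nuT (N : ℕ) (T : ℝ) : Measure (ℝ × Euc N) :=
  ((volume : Measure ℝ).restrict (Ioc 0 T)).prod volume

instance (N : ℕ) (T : ℝ) : SFinite (nuT N T) := by unfold nuT; infer_instance

def etaF (N : ℕ) (T : ℝ) (F : ℝ × Euc N → ℝ) (x : Euc N) : ℝ :=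
  ∫ v, gk N v.1 (x - v.2) * F v ∂(nuT N T)

lemma gk_meas' {α : Type*} [MeasurableSpace α] (N : ℕ) {f : α → ℝ} {g : α → Euc N}
    (hf : Measurable f) (hg : Measurable g) : Measurable fun a => gk N (f a) (g a) :=
  (gk_meas N).comp (hf.prodMk hg)

lemma nuT_pos (N : ℕ) (T : ℝ) : ∀ᵐ v ∂(nuT N T), 0 < v.1 ∧ v.1 ≤ T := by
  unfold nuT
  have h : ∀ᵐ t ∂((volume : Measure ℝ).restrict (Ioc 0 T)), 0 < t ∧ t ≤ T := by
    filter_upwards [ae_restrict_mem measurableSet_Ioc] with t ht using ht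
  exact Measure.quasiMeasurePreserving_fst.ae h

lemma nuT_lint (N : ℕ) (T : ℝ) {f : ℝ × Euc N → ENNReal} (hf : Measurable f) :
    ∫⁻ v, f v ∂(nuT N T) = ∫⁻ t in Ioc 0 T, ∫⁻ y, f (t, y) := by
  unfold nuT; rw [lintegral_prod _ hf.aemeasurable]

lemma nuT_gk (N : ℕ) {T : ℝ} (x : Euc N) :
    ∫⁻ v, ENNReal.ofReal (gk N v.1 (x - v.2)) ∂(nuT N T) = ENNReal.ofReal T := by
  rw [nuT_lint N T (gk_meas' N (by fun_prop) (by fun_prop)).ennreal_ofReal]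
  rw [setLIntegral_congr_fun (g := fun _ => 1) measurableSet_Ioc fun t ht => lint_gk_sub N ht.1 x]
  simp

/-- weighted kernel bounds -/
lemma nuT_kernel (N : ℕ) {b : ℝ} (hb1 : 1 / 2 < b) (hb2 : b < 1) :
    ∃ C : ℝ, 0 < C ∧ ∀ (T : ℝ) (x h : Euc N), h ≠ 0 →
      ∫⁻ v, ENNReal.ofReal |gk N v.1 (x + h - v.2) - gk N v.1 (x - v.2)| *
        ENNReal.ofReal (v.1 ^ (-b)) ∂(nuT N T) ≤ ENNReal.ofReal (C * ‖h‖ ^ (2 - 2 * b)) := by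
  obtain ⟨C1, hC1, H1⟩ := gk_modulus N
  obtain ⟨C2, hC2, H2⟩ := aux_time hb1 hb2
  refine ⟨C1 * C2, by positivity, fun T x h hh => ?_⟩
  have hm : Measurable fun v : ℝ × Euc N =>
      ENNReal.ofReal |gk N v.1 (x + h - v.2) - gk N v.1 (x - v.2)| := by
    have := gk_meas' N (f := fun v : ℝ × Euc N => v.1) (g := fun v => x + h - v.2)
      (by fun_prop) (by fun_prop)
    have := gk_meas' N (f := fun v : ℝ × Euc N => v.1) (g := fun v => x - v.2)
      (by fun_prop) (by fun_prop)
    fun_prop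
  rw [nuT_lint N T (by fun_prop)]
  calc _ ≤ ∫⁻ t in Ioc 0 T, ENNReal.ofReal C1 * ENNReal.ofReal (min 1 (‖h‖ / √t) * t ^ (-b)) := by
        apply setLIntegral_mono' measurableSet_Ioc
        intro t ht
        simp only
        rw [lintegral_mul_const' _ _ ENNReal.ofReal_ne_top]
        have e : ∫⁻ y, ENNReal.ofReal |gk N t (x + h - y) - gk N t (x - y)| =
            ∫⁻ z, ENNReal.ofReal |gk N t (z + h) - gk N t z| := by
          rw [← lintegral_sub_left_eq_self (fun z => ENNReal.ofReal |gk N t (z + h) - gk N t z|) x]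
          congr 1; ext y; rw [sub_add_eq_add_sub]
        rw [e]
        calc _ ≤ ENNReal.ofReal (C1 * min 1 (‖h‖ / √t)) * ENNReal.ofReal (t ^ (-b)) := by
              gcongr; exact H1 t ht.1 h
          _ = _ := by
              have : 0 ≤ min 1 (‖h‖ / √t) := le_min zero_le_one (by positivity)
              rw [← ENNReal.ofReal_mul (by positivity), ← ENNReal.ofReal_mul (by positivity), mul_assoc]
    _ ≤ ∫⁻ t in Ioi 0, ENNReal.ofReal C1 * ENNReal.ofReal (min 1 (‖h‖ / √t) * t ^ (-b)) :=
        lintegral_mono_set Ioc_subset_Ioi_self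
    _ = ENNReal.ofReal C1 * ∫⁻ t in Ioi 0, ENNReal.ofReal (min 1 (‖h‖ / √t) * t ^ (-b)) :=
        lintegral_const_mul _ (by fun_prop)
    _ ≤ ENNReal.ofReal C1 * ENNReal.ofReal (C2 * ‖h‖ ^ (2 - 2 * b)) := by
        gcongr; exact H2 _ (norm_pos_iff.2 hh)
    _ = _ := by rw [← ENNReal.ofReal_mul hC1.le, mul_assoc]

section
variable {N : ℕ} {T B : ℝ} {F : ℝ × Euc N → ℝ}

lemma etaF_int (hF : Measurable F) (h0 : ∀ v, 0 ≤ F v) (hB : ∀ v, F v ≤ B) (x : Euc N) :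
    Integrable (fun v => gk N v.1 (x - v.2) * F v) (nuT N T) := by
  have hm : Measurable fun v : ℝ × Euc N => gk N v.1 (x - v.2) :=
    gk_meas' N (by fun_prop) (by fun_prop)
  have h1 : Integrable (fun v => gk N v.1 (x - v.2)) (nuT N T) := by
    refine ⟨hm.aestronglyMeasurable, ?_⟩
    rw [hasFiniteIntegral_iff_ofReal, nuT_gk]
    · exact ENNReal.ofReal_lt_top
    · filter_upwards [nuT_pos N T] with v hv using (gk_pos N hv.1 _).le
  refine h1.mul_bdd (c := B) hF.aestronglyMeasurable (Eventually.of_forall fun v => ?_)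
  rw [norm_of_nonneg (h0 v)]; exact hB v

lemma etaF_nonneg (h0 : ∀ v, 0 ≤ F v) (x : Euc N) : 0 ≤ etaF N T F x := by
  apply integral_nonneg_of_ae
  filter_upwards [nuT_pos N T] with v hv using mul_nonneg (gk_pos N hv.1 _).le (h0 v)

lemma etaF_ofReal (hF : Measurable F) (h0 : ∀ v, 0 ≤ F v) (hB : ∀ v, F v ≤ B) (x : Euc N) :
    ENNReal.ofReal (etaF N T F x) =
      ∫⁻ v, ENNReal.ofReal (gk N v.1 (x - v.2)) * ENNReal.ofReal (F v) ∂(nuT N T) := by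
  unfold etaF
  rw [ofReal_integral_eq_lintegral_ofReal (etaF_int hF h0 hB x)]
  · apply lintegral_congr_ae
    filter_upwards [nuT_pos N T] with v hv
    rw [ENNReal.ofReal_mul (gk_pos N hv.1 _).le]
  · filter_upwards [nuT_pos N T] with v hv using mul_nonneg (gk_pos N hv.1 _).le (h0 v)

lemma etaF_le (hT : 0 < T) (hF : Measurable F) (h0 : ∀ v, 0 ≤ F v) (hB : ∀ v, F v ≤ B) (x : Euc N) :
    etaF N T F x ≤ T * B := by
  have hB0 : 0 ≤ B := (h0 (0, 0)).trans (hB _)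
  rw [← ENNReal.ofReal_le_ofReal_iff (by positivity), etaF_ofReal hF h0 hB]
  calc _ ≤ ∫⁻ v, ENNReal.ofReal (gk N v.1 (x - v.2)) * ENNReal.ofReal B ∂(nuT N T) := by
        gcongr with v; exact hB v
    _ = _ := by
        rw [lintegral_mul_const _ (gk_meas' N (by fun_prop) (by fun_prop)).ennreal_ofReal, nuT_gk,
          ENNReal.ofReal_mul hT.le]

lemma etaF_diff (hF : Measurable F) (h0 : ∀ v, 0 ≤ F v) (hB : ∀ v, F v ≤ B) (x h : Euc N) :
    ENNReal.ofReal |etaF N T F (x + h) - etaF N T F x| ≤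
      ∫⁻ v, ENNReal.ofReal |gk N v.1 (x + h - v.2) - gk N v.1 (x - v.2)| *
        ENNReal.ofReal (F v) ∂(nuT N T) := by
  unfold etaF
  rw [← integral_sub (etaF_int hF h0 hB _) (etaF_int hF h0 hB _), ← norm_eq_abs, ofReal_norm]
  refine (enorm_integral_le_lintegral_enorm _).trans (le_of_eq ?_)
  congr 1; ext v
  rw [← ENNReal.ofReal_mul (abs_nonneg _), ← ofReal_norm, norm_eq_abs, ← sub_mul, abs_mul,
    abs_of_nonneg (h0 v)]

lemma etaF_cont (hT : 0 < T) (hF : Measurable F) (h0 : ∀ v, 0 ≤ F v) (hB : ∀ v, F v ≤ B) :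
    Continuous (etaF N T F) := by
  have hB0 : 0 ≤ B := (h0 (0, 0)).trans (hB _)
  obtain ⟨C, hC, H⟩ := nuT_kernel N (b := 3 / 4) (by norm_num) (by norm_num)
  have key : ∀ x h : Euc N, |etaF N T F (x + h) - etaF N T F x| ≤
      B * T ^ (3 / 4 : ℝ) * C * ‖h‖ ^ (1 / 2 : ℝ) := by
    intro x h
    by_cases hh : h = 0
    · simp [hh]
    rw [← ENNReal.ofReal_le_ofReal_iff (by positivity)]
    refine (etaF_diff hF h0 hB x h).trans ?_
    calc _ ≤ ∫⁻ v, ENNReal.ofReal (B * T ^ (3 / 4 : ℝ)) *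
          (ENNReal.ofReal |gk N v.1 (x + h - v.2) - gk N v.1 (x - v.2)| *
            ENNReal.ofReal (v.1 ^ (-(3 / 4) : ℝ))) ∂(nuT N T) := by
          apply lintegral_mono_ae
          filter_upwards [nuT_pos N T] with v hv
          rw [mul_left_comm]
          gcongr
          rw [← ENNReal.ofReal_mul (by positivity)]
          apply ENNReal.ofReal_le_ofReal
          rw [mul_assoc]
          refine (hB v).trans (le_mul_of_one_le_right hB0 ?_)
          rw [rpow_neg hv.1.le, ← div_eq_mul_inv, one_le_div (rpow_pos_of_pos hv.1 _)]
          exact rpow_le_rpow hv.1.le hv.2 (by norm_num)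
      _ = ENNReal.ofReal (B * T ^ (3 / 4 : ℝ)) * ∫⁻ v, 
          (ENNReal.ofReal |gk N v.1 (x + h - v.2) - gk N v.1 (x - v.2)| *
            ENNReal.ofReal (v.1 ^ (-(3 / 4) : ℝ))) ∂(nuT N T) := lintegral_const_mul' _ _ (by simp)
      _ ≤ ENNReal.ofReal (B * T ^ (3 / 4 : ℝ)) * ENNReal.ofReal (C * ‖h‖ ^ (2 - 2 * (3 / 4) : ℝ)) := by
          gcongr; exact H T x h hh
      _ = _ := by
          rw [← ENNReal.ofReal_mul (by positivity)]; congr 1; norm_num; ring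
  rw [continuous_iff_continuousAt]
  intro x
  rw [ContinuousAt, tendsto_iff_dist_tendsto_zero]
  have h1 : Tendsto (fun y : Euc N => B * T ^ (3 / 4 : ℝ) * C * ‖y - x‖ ^ (1 / 2 : ℝ)) (nhds x) (nhds 0) := by
    have : Continuous fun y : Euc N => B * T ^ (3 / 4 : ℝ) * C * ‖y - x‖ ^ (1 / 2 : ℝ) := by
      fun_prop (disch := norm_num)
    have := this.tendsto x
    simpa using this
  refine squeeze_zero (fun _ => dist_nonneg) (fun y => ?_) h1
  have := key x (y - x)
  rwa [add_sub_cancel] at this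

lemma etaF_Lp (hT : 0 < T) {p : ℝ} (hp : 1 < p) (hF : Measurable F) (h0 : ∀ v, 0 ≤ F v)
    (hB : ∀ v, F v ≤ B) :
    ∫⁻ x, ENNReal.ofReal (|etaF N T F x| ^ p) ≤
      ENNReal.ofReal (T ^ (p - 1)) * ∫⁻ v, ENNReal.ofReal (F v) ^ p ∂(nuT N T) := by
  have hm : Measurable fun z : Euc N × ℝ × Euc N => ENNReal.ofReal (gk N z.2.1 (z.1 - z.2.2)) :=
    (gk_meas' N (by fun_prop) (by fun_prop)).ennreal_ofReal
  have h := schur (volume : Measure (Euc N)) (nuT N T) hp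
    (K := fun x v => ENNReal.ofReal (gk N v.1 (x - v.2))) (F := fun v => ENNReal.ofReal (F v))
    (W := fun _ => 1) (g := fun _ => 1) (d := fun _ => 1) (C1 := ENNReal.ofReal T) (C2 := 1)
    hm hF.ennreal_ofReal (by fun_prop) (by fun_prop) (by fun_prop) (by simp) (by simp)
    (by simp [nuT_gk]) (by
      filter_upwards [nuT_pos N T] with v hv
      simp [lint_gk_sub' N hv.1])
  rw [mul_one, ENNReal.ofReal_rpow_of_nonneg hT.le (by linarith)] at h
  refine (lintegral_mono fun x => ?_).trans h
  rw [one_mul, ← etaF_ofReal hF h0 hB, abs_of_nonneg (etaF_nonneg h0 x),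
    ENNReal.ofReal_rpow_of_nonneg (etaF_nonneg h0 x) (by linarith)]

end

/-- Besov energy. -/
def bes (N : ℕ) (p : ℝ) (η : Euc N → ℝ) : ENNReal :=
  ∫⁻ x, ∫⁻ h, ENNReal.ofReal (|η (x + h) - η x| ^ p * ‖h‖ ^ (-((N:ℝ) + 2 * (p - 1))))

lemma etaF_besov (N : ℕ) (hN : 1 ≤ N) {p : ℝ} (hp : 1 < p) (hp2 : p < 2) :
    ∃ C : ℝ, 0 < C ∧ ∀ (T B : ℝ) (F : ℝ × Euc N → ℝ), 0 < T → Measurable F → (∀ v, 0 ≤ F v) →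
      (∀ v, F v ≤ B) → bes N p (etaF N T F) ≤
        ENNReal.ofReal C * ∫⁻ v, ENNReal.ofReal (F v) ^ p ∂(nuT N T) := by
  have hp1 : 0 < p - 1 := by linarith
  obtain ⟨b, hb1, hb2, hb3⟩ : ∃ b : ℝ, 1 / 2 < b ∧ b < 1 ∧ 2 * b * (p - 1) < 1 := by
    refine ⟨1 / 2 + (2 - p) / 4, by linarith, by linarith, ?_⟩
    nlinarith [mul_pos hp1 (show 0 < 2 - p by linarith)]
  obtain ⟨C1, hC1, H1⟩ := nuT_kernel N hb1 hb2
  obtain ⟨C2, hC2, H2⟩ := gk_modulus N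
  obtain ⟨C3, hC3, H3⟩ := aux_radial N hN (m := 1) (γ := 2 * b * (p - 1)) (by positivity) hb3
  refine ⟨C1 ^ (p - 1) * (C2 * C3), by positivity, fun T B F hT hF h0 hB => ?_⟩
  set K : Euc N × Euc N → ℝ × Euc N → ENNReal := fun u v =>
    ENNReal.ofReal |gk N v.1 (u.1 + u.2 - v.2) - gk N v.1 (u.1 - v.2)| with hKdef
  have hK : Measurable (Function.uncurry K) := by
    have a1 := gk_meas' N (f := fun z : (Euc N × Euc N) × (ℝ × Euc N) => z.2.1)
      (g := fun z => z.1.1 + z.1.2 - z.2.2) (by fun_prop) (by fun_prop)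
    have a2 := gk_meas' N (f := fun z : (Euc N × Euc N) × (ℝ × Euc N) => z.2.1)
      (g := fun z => z.1.1 - z.2.2) (by fun_prop) (by fun_prop)
    exact ((a1.sub a2).abs).ennreal_ofReal
  have hKv : ∀ v, Measurable fun u => K u v := fun v => hK.of_uncurry_right
  have hη : Measurable (etaF N T F) := (etaF_cont hT hF h0 hB).measurable
  have h := schur (volume : Measure (Euc N × Euc N)) (nuT N T) hp (K := K)
    (F := fun v => ENNReal.ofReal (F v))
    (W := fun v => ENNReal.ofReal (v.1 ^ (-b))) (g := fun u => ENNReal.ofReal (‖u.2‖ ^ (2 - 2 * b)))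
    (d := fun u => ENNReal.ofReal (‖u.2‖ ^ (-((N:ℝ) + 2 * (p - 1)))))
    (C1 := ENNReal.ofReal C1) (C2 := ENNReal.ofReal (C2 * C3))
    hK hF.ennreal_ofReal (by fun_prop) (by fun_prop) (by fun_prop)
    (by
      filter_upwards [nuT_pos N T] with v hv
      simpa using rpow_pos_of_pos hv.1 _)
    (by simp)
    (by
      refine Eventually.of_forall fun u => ?_
      by_cases hu : u.2 = 0
      · simp [hKdef, hu]
      · rw [← ENNReal.ofReal_mul hC1.le]; exact H1 T u.1 u.2 hu)
    (by
      filter_upwards [nuT_pos N T] with v hv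
      have := hKv v
      rw [Measure.volume_eq_prod, lintegral_prod_symm _ (by fun_prop)]
      calc _ ≤ ∫⁻ h : Euc N, ENNReal.ofReal C2 *
            ENNReal.ofReal (min 1 (‖h‖ / √v.1) ^ (1:ℝ) * ‖h‖ ^ (-((N:ℝ) + 2 * b * (p - 1)))) := by
            gcongr with h
            simp only
            by_cases hh : h = 0
            · simp [hKdef, hh]
            have hh' : 0 < ‖h‖ := norm_pos_iff.2 hh
            have hmin : 0 ≤ min 1 (‖h‖ / √v.1) := le_min zero_le_one (by positivity)
            have e : ∫⁻ x, K (x, h) v = ∫⁻ z, ENNReal.ofReal |gk N v.1 (z + h) - gk N v.1 z| := by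
              rw [← lintegral_sub_right_eq_self
                (fun z => ENNReal.ofReal |gk N v.1 (z + h) - gk N v.1 z|) v.2]
              congr 1; ext y; simp only [hKdef]; rw [sub_add_eq_add_sub]
            rw [lintegral_mul_const' _ _ (by
              rw [ENNReal.ofReal_rpow_of_nonneg (by positivity) hp1.le]
              exact ENNReal.mul_ne_top ENNReal.ofReal_ne_top ENNReal.ofReal_ne_top), e]
            rw [ENNReal.ofReal_rpow_of_nonneg (by positivity) hp1.le,
              ← ENNReal.ofReal_mul (by positivity), ← ENNReal.ofReal_mul hC2.le, rpow_one, ← mul_assoc]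
            rw [ENNReal.ofReal_mul (by positivity : 0 ≤ C2 * min 1 (‖h‖ / √v.1))]
            gcongr
            · exact H2 _ hv.1 h
            · rw [← rpow_mul hh'.le, ← rpow_add hh']
              apply le_of_eq; congr 1; ring
        _ = ENNReal.ofReal C2 * ∫⁻ h : Euc N, 
            ENNReal.ofReal (min 1 (‖h‖ / √v.1) ^ (1:ℝ) * ‖h‖ ^ (-((N:ℝ) + 2 * b * (p - 1)))) :=
            lintegral_const_mul' _ _ ENNReal.ofReal_ne_top
        _ ≤ ENNReal.ofReal C2 * ENNReal.ofReal (C3 * √v.1 ^ (-(2 * b * (p - 1)))) := by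
            gcongr; exact H3 _ (sqrt_pos.2 hv.1)
        _ = _ := by
            have hv1 := hv.1
            rw [ENNReal.ofReal_rpow_of_nonneg (by positivity) hp1.le,
              ← ENNReal.ofReal_mul hC2.le, ← ENNReal.ofReal_mul (by positivity)]
            rw [sqrt_eq_rpow, ← rpow_mul hv.1.le, ← rpow_mul hv.1.le, ← mul_assoc]
            congr 3; ring)
  rw [ENNReal.ofReal_rpow_of_nonneg hC1.le hp1.le, ← ENNReal.ofReal_mul (by positivity)] at h
  refine le_trans ?_ h
  have hm2 : Measurable fun u : Euc N × Euc N => (∫⁻ v, K u v * ENNReal.ofReal (F v) ∂(nuT N T)) := by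
    apply Measurable.lintegral_prod_right'
      (f := fun z : (Euc N × Euc N) × (ℝ × Euc N) => K z.1 z.2 * ENNReal.ofReal (F z.2))
    have : Measurable fun z : (Euc N × Euc N) × (ℝ × Euc N) => K z.1 z.2 := hK
    fun_prop
  rw [Measure.volume_eq_prod, lintegral_prod _ (by fun_prop)]
  unfold bes
  gcongr with x h
  rw [mul_comm, ENNReal.ofReal_mul (by positivity)]
  gcongr
  rw [← ENNReal.ofReal_rpow_of_nonneg (abs_nonneg _) (by linarith)]
  gcongr
  exact etaF_diff hF h0 hB x h

lemma Lp_real (N : ℕ) (p : ℝ) {η : Euc N → ℝ} (hη : Continuous η) :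
    ∫ x, |η x| ^ p = (∫⁻ x, ENNReal.ofReal (|η x| ^ p)).toReal := by
  rw [integral_eq_lintegral_of_nonneg_ae]
  · exact Eventually.of_forall fun x => by positivity
  · have := hη.measurable
    exact Measurable.aestronglyMeasurable (by fun_prop)

lemma bes_meas (N : ℕ) (p : ℝ) {η : Euc N → ℝ} (hη : Continuous η) :
    Measurable fun u : Euc N × Euc N =>
      ENNReal.ofReal (|η (u.1 + u.2) - η u.1| ^ p * ‖u.2‖ ^ (-((N:ℝ) + 2 * (p - 1)))) := by
  have := hη.measurable
  fun_prop

lemma bes_real (N : ℕ) {p : ℝ} {η : Euc N → ℝ} (hη : Continuous η) (hb : bes N p η ≠ ⊤) :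
    ∫ x, ∫ y, |η x - η y| ^ p / ‖x - y‖ ^ ((N : ℝ) + 2 * (p - 1)) = (bes N p η).toReal := by
  have hm : Measurable fun x => ∫⁻ h, ENNReal.ofReal (|η (x + h) - η x| ^ p * ‖h‖ ^ (-((N:ℝ) + 2 * (p - 1)))) :=
    (bes_meas N p hη).lintegral_prod_right'
  have hηm := hη.measurable
  rw [bes, ← integral_toReal hm.aemeasurable (ae_lt_top hm hb)]
  congr 1; ext x
  rw [integral_eq_lintegral_of_nonneg_ae]
  · congr 1
    rw [← lintegral_add_left_eq_self _ x]
    congr 1; ext h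
    have : ‖x - (x + h)‖ = ‖h‖ := by simp
    rw [this, abs_sub_comm, rpow_neg (norm_nonneg _), div_eq_mul_inv]
  · exact Eventually.of_forall fun y => by positivity
  · exact Measurable.aestronglyMeasurable (by fun_prop)

lemma bes_swap (N : ℕ) {p : ℝ} (hp : 1 < p) {η : Euc N → ℝ} (hη : Continuous η) :
    bes N p η = ∫⁻ h, ENNReal.ofReal (‖h‖ ^ (-((N:ℝ) + 2 * (p - 1)))) *
      ∫⁻ x, ENNReal.ofReal |η (x + h) - η x| ^ p := by
  rw [bes, lintegral_lintegral_swap (bes_meas N p hη).aemeasurable]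
  congr 1; ext h
  rw [← lintegral_const_mul' _ _ ENNReal.ofReal_ne_top]
  congr 1; ext x
  rw [ENNReal.ofReal_rpow_of_nonneg (abs_nonneg _) (by linarith), ← ENNReal.ofReal_mul (by positivity),
    mul_comm]

lemma moll_ineq (N : ℕ) {p : ℝ} (hp : 1 < p) {φ f : Euc N → ENNReal} (hφ : Measurable φ)
    (h1 : ∫⁻ s, φ s = 1) (hf : Measurable f) :
    ∫⁻ x, (∫⁻ s, φ s * f (x - s)) ^ p ≤ ∫⁻ x, f x ^ p := by
  calc ∫⁻ x, (∫⁻ s, φ s * f (x - s)) ^ p ≤ ∫⁻ x, ∫⁻ s, φ s * f (x - s) ^ p := by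
        gcongr with x
        have := jensen_w volume hp hφ.aemeasurable (F := fun s => f (x - s)) (by fun_prop)
        simpa [h1] using this
    _ = ∫⁻ s, ∫⁻ x, φ s * f (x - s) ^ p := lintegral_lintegral_swap (by fun_prop)
    _ = ∫⁻ s, φ s * ∫⁻ x, f x ^ p := by
        congr 1; ext s
        rw [lintegral_const_mul _ (by fun_prop), lintegral_sub_right_eq_self (fun x => f x ^ p)]
    _ = _ := by rw [lintegral_mul_const _ hφ, h1, one_mul]

lemma ofReal_abs_integral_le {α : Type*} [MeasurableSpace α] (ν : Measure α) (f : α → ℝ) :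
    ENNReal.ofReal |∫ x, f x ∂ν| ≤ ∫⁻ x, ENNReal.ofReal |f x| ∂ν := by
  have := enorm_integral_le_lintegral_enorm (μ := ν) f
  simpa [← ofReal_norm] using this

/-- mollification -/
def mol (N : ℕ) (φ η : Euc N → ℝ) (x : Euc N) : ℝ := ∫ s, φ s * η (x - s)

lemma mol_int (N : ℕ) {φ η : Euc N → ℝ} (hφ : Continuous φ) (hc : HasCompactSupport φ)
    (hη : Continuous η) (x : Euc N) : Integrable fun s => φ s * η (x - s) := by
  apply Continuous.integrable_of_hasCompactSupport (by fun_prop)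
  exact hc.mul_right

lemma mol_Lp (N : ℕ) {p : ℝ} (hp : 1 < p) {φ η : Euc N → ℝ} (hφ : Continuous φ) (hφ0 : ∀ s, 0 ≤ φ s)
    (h1 : ∫⁻ s, ENNReal.ofReal (φ s) = 1) (hη : Continuous η) :
    ∫⁻ x, ENNReal.ofReal (|mol N φ η x| ^ p) ≤ ∫⁻ x, ENNReal.ofReal (|η x| ^ p) := by
  have hm := hη.measurable
  have := moll_ineq N hp (φ := fun s => ENNReal.ofReal (φ s)) (f := fun x => ENNReal.ofReal |η x|)
    (hφ.measurable.ennreal_ofReal) h1 (by fun_prop)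
  have e : ∀ a : ℝ, ENNReal.ofReal (|a| ^ p) = ENNReal.ofReal |a| ^ p := fun a =>
    (ENNReal.ofReal_rpow_of_nonneg (abs_nonneg _) (by linarith)).symm
  simp only [e]
  refine le_trans ?_ this
  gcongr with x
  refine (ofReal_abs_integral_le _ _).trans (le_of_eq ?_)
  congr 1; ext s
  rw [abs_mul, abs_of_nonneg (hφ0 s), ENNReal.ofReal_mul (hφ0 s)]

lemma mol_bes (N : ℕ) {p : ℝ} (hp : 1 < p) {φ η : Euc N → ℝ} (hφ : Continuous φ) (hφ0 : ∀ s, 0 ≤ φ s)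
    (hc : HasCompactSupport φ)
    (h1 : ∫⁻ s, ENNReal.ofReal (φ s) = 1) (hη : Continuous η) (hmol : Continuous (mol N φ η)) :
    bes N p (mol N φ η) ≤ bes N p η := by
  have hm := hη.measurable
  rw [bes_swap N hp hmol, bes_swap N hp hη]
  refine lintegral_mono fun h => ?_
  refine mul_le_mul_right ?_ _
  have := moll_ineq N hp (φ := fun s => ENNReal.ofReal (φ s))
    (f := fun x => ENNReal.ofReal |η (x + h) - η x|)
    (hφ.measurable.ennreal_ofReal) h1 (by fun_prop)
  refine le_trans ?_ this
  gcongr with x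
  unfold mol
  rw [← integral_sub (mol_int N hφ hc hη _) (mol_int N hφ hc hη _)]
  refine (ofReal_abs_integral_le _ _).trans (le_of_eq ?_)
  congr 1; ext s
  rw [← mul_sub, abs_mul, abs_of_nonneg (hφ0 s), ENNReal.ofReal_mul (hφ0 s), add_sub_right_comm]

lemma cut_Lp (N : ℕ) {p : ℝ} (hp : 1 < p) {χ ζ : Euc N → ℝ} (h0 : ∀ x, 0 ≤ χ x) (h1 : ∀ x, χ x ≤ 1) :
    ∫⁻ x, ENNReal.ofReal (|χ x * ζ x| ^ p) ≤ ∫⁻ x, ENNReal.ofReal (|ζ x| ^ p) := by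
  refine lintegral_mono fun x => ENNReal.ofReal_le_ofReal (rpow_le_rpow (abs_nonneg _) ?_ (by linarith))
  rw [abs_mul, abs_of_nonneg (h0 x)]
  exact mul_le_of_le_one_left (abs_nonneg _) (h1 x)

lemma cut_bes (N : ℕ) (hN : 1 ≤ N) {p : ℝ} (hp : 1 < p) (hp2 : p < 2) {L : ℝ} (hL : 0 < L) :
    ∃ C : ℝ, 0 < C ∧ ∀ χ ζ : Euc N → ℝ, Continuous χ → Continuous ζ → (∀ x, 0 ≤ χ x) → (∀ x, χ x ≤ 1) →
      (∀ x h, |χ (x + h) - χ x| ≤ L * min 1 ‖h‖) →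
      bes N p (fun x => χ x * ζ x) ≤ ENNReal.ofReal C * (bes N p ζ + ∫⁻ x, ENNReal.ofReal (|ζ x| ^ p)) := by
  obtain ⟨C, hC, H⟩ := aux_radial N hN (m := p) (γ := 2 * (p - 1)) (by linarith) (by linarith)
  refine ⟨2 ^ (p - 1) * max 1 (L ^ p * C), by positivity, fun χ ζ hχ hζ h0 h1 hL2 => ?_⟩
  have hζm := hζ.measurable
  have e : ∀ a : ℝ, ENNReal.ofReal (|a| ^ p) = ENNReal.ofReal |a| ^ p := fun a =>
    (ENNReal.ofReal_rpow_of_nonneg (abs_nonneg _) (by linarith)).symm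
  set I := ∫⁻ x, ENNReal.ofReal (|ζ x| ^ p) with hI
  set w : Euc N → ENNReal := fun h => ENNReal.ofReal (‖h‖ ^ (-((N:ℝ) + 2 * (p - 1)))) with hw
  have hwm : Measurable w := by fun_prop
  rw [bes_swap N hp (η := fun x => χ x * ζ x) (hχ.mul hζ), bes_swap N hp hζ]
  have key : ∀ h : Euc N, ∫⁻ x, ENNReal.ofReal |χ (x + h) * ζ (x + h) - χ x * ζ x| ^ p ≤
      ENNReal.ofReal (2 ^ (p - 1)) * ((∫⁻ x, ENNReal.ofReal |ζ (x + h) - ζ x| ^ p) +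
        ENNReal.ofReal (L * min 1 ‖h‖) ^ p * I) := by
    intro h
    have hmin : 0 ≤ min 1 ‖h‖ := by positivity
    rw [hI, ← lintegral_const_mul _ (by fun_prop), ← lintegral_add_left (by fun_prop),
      ← lintegral_const_mul _ (by fun_prop)]
    gcongr with x
    rw [e, ← ENNReal.mul_rpow_of_nonneg _ _ (by linarith : 0 ≤ p),
      ← ENNReal.ofReal_mul (by positivity), ← ENNReal.ofReal_rpow_of_pos two_pos]
    simp only [ENNReal.ofReal_ofNat]
    refine le_trans ?_ (ENNReal.rpow_add_le_mul_rpow_add_rpow _ _ hp.le)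
    rw [← ENNReal.ofReal_add (by positivity) (by positivity)]
    gcongr
    calc |χ (x + h) * ζ (x + h) - χ x * ζ x| = |χ (x + h) * (ζ (x + h) - ζ x) + (χ (x + h) - χ x) * ζ x| := by
          congr 1; ring
      _ ≤ |χ (x + h) * (ζ (x + h) - ζ x)| + |(χ (x + h) - χ x) * ζ x| := abs_add_le _ _
      _ ≤ _ := by
          rw [abs_mul, abs_mul, abs_of_nonneg (h0 _)]
          gcongr
          · exact mul_le_of_le_one_left (abs_nonneg _) (h1 _)
          · exact hL2 x h
  have hmJ : Measurable fun h => ∫⁻ x, ENNReal.ofReal |ζ (x + h) - ζ x| ^ p := by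
    apply Measurable.lintegral_prod_right' (f := fun u : Euc N × Euc N => ENNReal.ofReal |ζ (u.2 + u.1) - ζ u.2| ^ p)
    fun_prop
  calc _ ≤ ∫⁻ h, w h * (ENNReal.ofReal (2 ^ (p - 1)) * ((∫⁻ x, ENNReal.ofReal |ζ (x + h) - ζ x| ^ p) +
        ENNReal.ofReal (L * min 1 ‖h‖) ^ p * I)) := by
        gcongr with h; exact key h
    _ = ENNReal.ofReal (2 ^ (p - 1)) * ((∫⁻ h, w h * ∫⁻ x, ENNReal.ofReal |ζ (x + h) - ζ x| ^ p) +
        (∫⁻ h, w h * ENNReal.ofReal (L * min 1 ‖h‖) ^ p) * I) := by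
        rw [← lintegral_mul_const _ (by fun_prop), ← lintegral_add_left (by fun_prop),
          ← lintegral_const_mul' _ _ ENNReal.ofReal_ne_top]
        congr 1; ext h; ring
    _ ≤ ENNReal.ofReal (2 ^ (p - 1)) * (ENNReal.ofReal (max 1 (L ^ p * C)) * (∫⁻ h, w h * ∫⁻ x, ENNReal.ofReal |ζ (x + h) - ζ x| ^ p) +
        ENNReal.ofReal (max 1 (L ^ p * C)) * I) := by
        gcongr
        · refine le_mul_of_one_le_left (zero_le) ?_
          simp
        · calc ∫⁻ h, w h * ENNReal.ofReal (L * min 1 ‖h‖) ^ p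
            = ENNReal.ofReal (L ^ p) * ∫⁻ h : Euc N, ENNReal.ofReal (min 1 (‖h‖ / 1) ^ p * ‖h‖ ^ (-((N:ℝ) + 2 * (p - 1)))) := by
                rw [← lintegral_const_mul _ (by fun_prop)]
                congr 1; ext h
                have hmin : 0 ≤ min 1 ‖h‖ := by positivity
                rw [ENNReal.ofReal_rpow_of_nonneg (by positivity) (by linarith), ← ENNReal.ofReal_mul (by positivity),
                  ← ENNReal.ofReal_mul (by positivity), div_one, mul_rpow hL.le hmin]
                congr 1; ring
            _ ≤ ENNReal.ofReal (L ^ p) * ENNReal.ofReal (C * 1 ^ (-(2 * (p - 1)))) := by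
                gcongr; exact H 1 one_pos
            _ ≤ _ := by
                rw [← ENNReal.ofReal_mul (by positivity), one_rpow, mul_one]
                gcongr; exact le_max_right _ _
    _ = _ := by
        rw [ENNReal.ofReal_mul (by positivity)]; ring

lemma q_facts {q : ℝ} (hq2 : 2 < q) : 1 < q / (q - 1) ∧ q / (q - 1) < 2 ∧
    2 / (q - 1) = 2 * (q / (q - 1) - 1) ∧ (q - 1) / q = 1 / (q / (q - 1)) := by
  have : 0 < q - 1 := by linarith
  refine ⟨?_, ?_, ?_, ?_⟩
  · rw [lt_div_iff₀ this]; linarith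
  · rw [div_lt_iff₀ this]; linarith
  · field_simp; ring
  · rw [one_div_div]

lemma mem_dual (N : ℕ) {q : ℝ} (hq2 : 2 < q) (μ : Measure (Euc N)) {ζ : Euc N → ℝ}
    (hs : ContDiff ℝ (⊤ : ℕ∞) ζ) (hc : HasCompactSupport ζ)
    (h1 : ∫⁻ x, ENNReal.ofReal (|ζ x| ^ (q / (q - 1))) ≤ ENNReal.ofReal ((1 / 2) ^ (q / (q - 1))))
    (h2 : bes N (q / (q - 1)) ζ ≤ ENNReal.ofReal ((1 / 2) ^ (q / (q - 1)))) :
    ∫ x, ζ x ∂μ ∈ dualSet N q μ := by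
  obtain ⟨a1, a2, a3, a4⟩ := q_facts hq2
  refine ⟨ζ, hs, hc, ?_, rfl⟩
  rw [a3, a4]
  set p := q / (q - 1)
  have hp : 0 < p := by linarith
  rw [Lp_real N p hs.continuous, bes_real N hs.continuous (ne_top_of_le_ne_top ENNReal.ofReal_ne_top h2)]
  have key : ∀ A : ENNReal, A ≤ ENNReal.ofReal ((1 / 2) ^ p) → A.toReal ^ (1 / p) ≤ 1 / 2 := by
    intro A hA
    calc A.toReal ^ (1 / p) ≤ ((1 / 2) ^ p) ^ (1 / p) := by
          apply rpow_le_rpow ENNReal.toReal_nonneg _ (by positivity)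
          exact ENNReal.toReal_le_of_le_ofReal (by positivity) hA
      _ = 1 / 2 := by
          rw [← rpow_mul (by norm_num), mul_one_div_cancel hp.ne', rpow_one]
  linarith [key _ h1, key _ h2]

lemma approx (N : ℕ) (hN : 1 ≤ N) {q : ℝ} (hq2 : 2 < q) : ∃ κ : ℝ, 0 < κ ∧
    ∀ (μ : Measure (Euc N)), IsFiniteMeasure μ → BddAbove (dualSet N q μ) →
    ∀ (η : Euc N → ℝ) (B : ℝ), Continuous η → (∀ x, 0 ≤ η x) → (∀ x, η x ≤ B) →
      ∫⁻ x, ENNReal.ofReal (|η x| ^ (q / (q - 1))) ≤ ENNReal.ofReal κ →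
      bes N (q / (q - 1)) η ≤ ENNReal.ofReal κ → ∫ x, η x ∂μ ≤ sSup (dualSet N q μ) := by
  obtain ⟨a1, a2, a3, a4⟩ := q_facts hq2
  let χ : ContDiffBump (0 : Euc N) := ⟨1, 2, one_pos, one_lt_two⟩
  obtain ⟨L, hL⟩ := ContDiff.lipschitzWith_of_hasCompactSupport (𝕂 := ℝ) (n := (⊤ : ℕ∞))
    χ.hasCompactSupport χ.contDiff (by simp)
  obtain ⟨C, hC, H⟩ := cut_bes N hN a1 a2 (L := (L:ℝ) + 1) (by positivity)
  refine ⟨(1 / 2) ^ (q / (q - 1)) / (2 * C + 1), by positivity, ?_⟩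
  intro μ hμ hbdd η B hη h0 hB hLp hbes
  set p := q / (q - 1)
  set κ := (1 / 2 : ℝ) ^ p / (2 * C + 1) with hκ
  have hκ0 : 0 < κ := by positivity
  have hκ1 : κ ≤ (1 / 2) ^ p := div_le_self (by positivity) (by linarith)
  have hκ2 : C * (κ + κ) ≤ (1 / 2) ^ p := by
    have : κ * (2 * C + 1) = (1 / 2) ^ p := by rw [hκ]; field_simp
    linarith
  let Φ : ℕ → ContDiffBump (0 : Euc N) := fun n => ⟨1 / (n + 2), 1 / (n + 1), by positivity, by
    apply one_div_lt_one_div_of_lt <;> [positivity; linarith]⟩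
  set φ : ℕ → Euc N → ℝ := fun n => (Φ n).normed volume with hφ
  set X : ℕ → Euc N → ℝ := fun n x => χ (((n : ℝ) + 1)⁻¹ • x) with hX
  have hφc : ∀ n, Continuous (φ n) := fun n => (Φ n).continuous_normed
  have hφs : ∀ n, HasCompactSupport (φ n) := fun n => (Φ n).hasCompactSupport_normed
  have hφ0 : ∀ n s, 0 ≤ φ n s := fun n s => (Φ n).nonneg_normed s
  have hφi : ∀ n, ∫ s, φ n s = 1 := fun n => (Φ n).integral_normed
  have hφ1 : ∀ n, ∫⁻ s, ENNReal.ofReal (φ n s) = 1 := by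
    intro n
    rw [← ofReal_integral_eq_lintegral_ofReal ((Φ n).integrable_normed)
      (Eventually.of_forall (hφ0 n)), hφi, ENNReal.ofReal_one]
  have hmc : ∀ n, (mol N (φ n) η) = convolution (φ n) η (ContinuousLinearMap.lsmul ℝ ℝ) volume := by
    intro n; ext x; simp [mol, convolution]
  have hms : ∀ n, ContDiff ℝ (⊤ : ℕ∞) (mol N (φ n) η) := by
    intro n; rw [hmc]
    exact (hφs n).contDiff_convolution_left _ (Φ n).contDiff_normed hη.locallyIntegrable
  have hmt : ∀ x, Tendsto (fun n => mol N (φ n) η x) atTop (nhds (η x)) := by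
    intro x
    simp only [hmc]
    apply ContDiffBump.convolution_tendsto_right_of_continuous _ hη
    exact tendsto_one_div_add_atTop_nhds_zero_nat
  have hXs : ∀ n, ContDiff ℝ (⊤ : ℕ∞) (X n) := by
    intro n; exact χ.contDiff.comp (contDiff_const_smul _)
  have hXc : ∀ n, HasCompactSupport (X n) := by
    intro n
    exact χ.hasCompactSupport.comp_smul (inv_ne_zero (by positivity))
  have hX0 : ∀ n x, 0 ≤ X n x := fun n x => χ.nonneg
  have hX1 : ∀ n x, X n x ≤ 1 := fun n x => χ.le_one
  have hXl : ∀ n x h, |X n (x + h) - X n x| ≤ ((L:ℝ) + 1) * min 1 ‖h‖ := by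
    intro n x h
    have l1 : |X n (x + h) - X n x| ≤ L * ‖h‖ := by
      have := hL.dist_le_mul (((n : ℝ) + 1)⁻¹ • (x + h)) (((n : ℝ) + 1)⁻¹ • x)
      rw [Real.dist_eq, dist_eq_norm, ← smul_sub, add_sub_cancel_left, norm_smul] at this
      refine this.trans ?_
      gcongr
      apply mul_le_of_le_one_left (norm_nonneg _)
      rw [norm_of_nonneg (by positivity)]
      apply inv_le_one_of_one_le₀
      have : (0:ℝ) ≤ n := by positivity
      linarith
    have l2 : |X n (x + h) - X n x| ≤ 1 := by
      rw [abs_le]; constructor <;> linarith [hX0 n x, hX1 n x, hX0 n (x+h), hX1 n (x+h)]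
    have hL0 : (0:ℝ) ≤ L := L.2
    rcases le_total 1 ‖h‖ with hh | hh
    · rw [min_eq_left hh]; linarith
    · rw [min_eq_right hh]; nlinarith [norm_nonneg h]
  have hXt : ∀ x, Tendsto (fun n => X n x) atTop (nhds 1) := by
    intro x
    apply tendsto_const_nhds.congr'
    obtain ⟨n0, hn0⟩ := exists_nat_ge ‖x‖
    filter_upwards [eventually_ge_atTop n0] with n hn
    symm
    apply χ.one_of_mem_closedBall
    rw [mem_closedBall_zero_iff, norm_smul, norm_of_nonneg (by positivity)]
    show _ ≤ (1:ℝ)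
    rw [inv_mul_le_iff₀ (by positivity), mul_one]
    have : (n0:ℝ) ≤ n := by exact_mod_cast hn
    linarith
  set ζ : ℕ → Euc N → ℝ := fun n x => X n x * mol N (φ n) η x with hζ
  have hmem : ∀ n, ∫ x, ζ n x ∂μ ∈ dualSet N q μ := by
    intro n
    have m1 := (mol_Lp N a1 (hφc n) (hφ0 n) (hφ1 n) hη).trans hLp
    have m2 := (mol_bes N a1 (hφc n) (hφ0 n) (hφs n) (hφ1 n) hη (hms n).continuous).trans hbes
    apply mem_dual N hq2 μ ((hXs n).mul (hms n)) (hXc n).mul_right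
    · exact ((cut_Lp N a1 (hX0 n) (hX1 n)).trans m1).trans (ENNReal.ofReal_le_ofReal hκ1)
    · refine (H (X n) _ (hXs n).continuous (hms n).continuous (hX0 n) (hX1 n) (hXl n)).trans ?_
      calc _ ≤ ENNReal.ofReal C * (ENNReal.ofReal κ + ENNReal.ofReal κ) := by gcongr
        _ = ENNReal.ofReal (C * (κ + κ)) := by
            rw [← ENNReal.ofReal_add hκ0.le hκ0.le, ENNReal.ofReal_mul hC.le]
        _ ≤ _ := ENNReal.ofReal_le_ofReal hκ2
  have hm0 : ∀ n x, 0 ≤ mol N (φ n) η x := fun n x =>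
    integral_nonneg fun s => mul_nonneg (hφ0 n s) (h0 _)
  have hmB : ∀ n x, mol N (φ n) η x ≤ B := by
    intro n x
    calc mol N (φ n) η x ≤ ∫ s, φ n s * B := by
          apply integral_mono (mol_int N (hφc n) (hφs n) hη x) ((Φ n).integrable_normed.mul_const _)
          intro s; exact mul_le_mul_of_nonneg_left (hB _) (hφ0 n s)
      _ = B := by rw [integral_mul_const, hφi, one_mul]
  have hlim : Tendsto (fun n => ∫ x, ζ n x ∂μ) atTop (nhds (∫ x, η x ∂μ)) := by
    apply tendsto_integral_of_dominated_convergence (fun _ => B)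
    · intro n; exact ((hXs n).continuous.mul (hms n).continuous).aestronglyMeasurable
    · exact integrable_const _
    · intro n
      refine Eventually.of_forall fun x => ?_
      rw [norm_of_nonneg (mul_nonneg (hX0 n x) (hm0 n x))]
      exact (mul_le_of_le_one_left (hm0 n x) (hX1 n x)).trans (hmB n x)
    · refine Eventually.of_forall fun x => ?_
      simpa using (hXt x).mul (hmt x)
  exact le_of_tendsto' hlim fun n => le_csSup hbdd (hmem n)

/-- heat potential as an extended nonnegative number -/
def Upot (N : ℕ) (μ : Measure (Euc N)) (v : ℝ × Euc N) : ENNReal :=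
  ∫⁻ y, ENNReal.ofReal (gk N v.1 (v.2 - y)) ∂μ

lemma Upot_meas (N : ℕ) (μ : Measure (Euc N)) [SFinite μ] : Measurable (Upot N μ) := by
  apply Measurable.lintegral_prod_right' (f := fun z : (ℝ × Euc N) × Euc N => ENNReal.ofReal (gk N z.1.1 (z.1.2 - z.2)))
  exact (gk_meas' N (by fun_prop) (by fun_prop)).ennreal_ofReal

lemma sSup_nonneg_dual (N : ℕ) {q : ℝ} (hq2 : 2 < q) (μ : Measure (Euc N)) (hb : BddAbove (dualSet N q μ)) :
    0 ≤ sSup (dualSet N q μ) := by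
  have hp : 0 < q / (q - 1) := by linarith [(q_facts hq2).1]
  have := mem_dual N hq2 μ (ζ := fun _ => 0) contDiff_const HasCompactSupport.zero
    (by simp [zero_rpow hp.ne']) (by simp [bes, zero_rpow hp.ne'])
  simpa using le_csSup hb this

lemma upperA (N : ℕ) (hN : 1 ≤ N) {q T : ℝ} (hq2 : 2 < q) (hT : 0 < T) : ∃ C : ℝ, 0 < C ∧
    ∀ (μ : Measure (Euc N)), IsFiniteMeasure μ → BddAbove (dualSet N q μ) →
      ∫⁻ v, Upot N μ v ^ q ∂(nuT N T) ≤ ENNReal.ofReal ((C * sSup (dualSet N q μ)) ^ q) := by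
  obtain ⟨a1, a2, a3, a4⟩ := q_facts hq2
  obtain ⟨κ, hκ, Hκ⟩ := approx N hN hq2
  obtain ⟨C, hC, HC⟩ := etaF_besov N hN a1 a2
  set p := q / (q - 1) with hp
  have hp0 : 0 < p := by linarith
  have hq0 : 0 < q := by linarith
  have hqp : (q - 1) * p = q := by rw [hp]; field_simp [show q - 1 ≠ 0 by linarith]
  have hpq : 1 - 1 / p = 1 / q := by rw [hp, one_div_div]; field_simp; ring
  have hTp : 0 < T ^ (p - 1) := by positivity
  set κ0 := κ / (T ^ (p - 1) + C) with hκ0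
  have hκ00 : 0 < κ0 := by positivity
  refine ⟨κ0 ^ (-(1 / p)), by positivity, fun μ hμ hb => ?_⟩
  set M := sSup (dualSet N q μ) with hM
  have hM0 : 0 ≤ M := sSup_nonneg_dual N hq2 μ hb
  have hUm := Upot_meas N μ
  set V : ℕ → ℝ × Euc N → ENNReal := fun n => {v : ℝ × Euc N | ‖v.2‖ ≤ n}.indicator (fun v => min (Upot N μ v) n)
    with hV
  have hset : ∀ n : ℕ, MeasurableSet {v : ℝ × Euc N | ‖v.2‖ ≤ n} := fun n =>
    measurableSet_le (by fun_prop) (by fun_prop)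
  have hVm : ∀ n, Measurable (V n) := fun n => (hUm.min measurable_const).indicator (hset n)
  have hVn : ∀ n v, V n v ≤ n := by
    intro n v; apply indicator_le' (g := fun _ => (n:ENNReal)) <;> simp
  have hVU : ∀ n v, V n v ≤ Upot N μ v := by
    intro n v; refine (indicator_le_self _ _ v).trans (min_le_left _ _)
  have hVtop : ∀ n v, V n v ≠ ⊤ := fun n v => ne_top_of_le_ne_top (by simp) (hVn n v)
  have main : ∀ n, ∫⁻ v, V n v ^ q ∂(nuT N T) ≤ ENNReal.ofReal ((κ0 ^ (-(1 / p)) * M) ^ q) := by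
    intro n
    set I := ∫⁻ v, V n v ^ q ∂(nuT N T) with hI
    have hItop : I ≠ ⊤ := by
      have hfin : nuT N T {v : ℝ × Euc N | ‖v.2‖ ≤ n} ≠ ⊤ := by
        have : {v : ℝ × Euc N | ‖v.2‖ ≤ n} = univ ×ˢ closedBall 0 (n:ℝ) := by ext v; simp
        rw [this, nuT, Measure.prod_prod]
        apply ENNReal.mul_ne_top
        · simp
        · exact measure_closedBall_lt_top.ne
      have : I ≤ ∫⁻ v, {v : ℝ × Euc N | ‖v.2‖ ≤ n}.indicator (fun _ => (n:ENNReal) ^ q) v ∂(nuT N T) := by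
        apply lintegral_mono; intro v
        by_cases hv : ‖v.2‖ ≤ n
        · simp only [hV, indicator, mem_setOf_eq, hv, if_true]; gcongr; exact min_le_right _ _
        · simp [hV, indicator, hv, hq0]
      rw [lintegral_indicator_const (hset n)] at this
      exact ne_top_of_le_ne_top (ENNReal.mul_ne_top (by simp [hq0.le]) hfin) this
    by_cases hI0 : I = 0
    · simp [hI0]
    have hIr : 0 < I.toReal := ENNReal.toReal_pos hI0 hItop
    set l := (κ0 / I.toReal) ^ (1 / p) with hl
    have hl0 : 0 < l := by positivity
    set F : ℝ × Euc N → ℝ := fun v => l * (V n v).toReal ^ (q - 1) with hF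
    have hFm : Measurable F := by have := hVm n; fun_prop
    have hF0 : ∀ v, 0 ≤ F v := fun v => by positivity
    have hFB : ∀ v, F v ≤ l * (n:ℝ) ^ (q - 1) := by
      intro v; simp only [hF]; gcongr
      · linarith
      · exact ENNReal.toReal_le_of_le_ofReal (by positivity) (by simpa using hVn n v)
    have hoF : ∀ v, ENNReal.ofReal (F v) = ENNReal.ofReal l * V n v ^ (q - 1) := by
      intro v; simp only [hF]
      rw [ENNReal.ofReal_mul hl0.le, ← ENNReal.ofReal_rpow_of_nonneg ENNReal.toReal_nonneg (by linarith),
        ENNReal.ofReal_toReal (hVtop n v)]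
    have hFp : ∫⁻ v, ENNReal.ofReal (F v) ^ p ∂(nuT N T) = ENNReal.ofReal κ0 := by
      have : ∀ v, ENNReal.ofReal (F v) ^ p = ENNReal.ofReal (l ^ p) * V n v ^ q := by
        intro v
        rw [hoF, ENNReal.mul_rpow_of_nonneg _ _ hp0.le, ← ENNReal.rpow_mul, hqp,
          ENNReal.ofReal_rpow_of_nonneg hl0.le hp0.le]
      simp only [this]
      rw [lintegral_const_mul' _ _ ENNReal.ofReal_ne_top, ← hI, ← ENNReal.ofReal_toReal hItop,
        ← ENNReal.ofReal_mul (by positivity), hl, ← rpow_mul (by positivity), one_div_mul_cancel hp0.ne',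
        rpow_one, div_mul_cancel₀ _ hIr.ne']
    have b1 : ∫⁻ x, ENNReal.ofReal (|etaF N T F x| ^ p) ≤ ENNReal.ofReal κ := by
      refine (etaF_Lp hT a1 hFm hF0 hFB).trans ?_
      rw [hFp, ← ENNReal.ofReal_mul hTp.le]
      apply ENNReal.ofReal_le_ofReal
      rw [hκ0, mul_div_assoc', div_le_iff₀ (by positivity)]; nlinarith
    have b2 : bes N p (etaF N T F) ≤ ENNReal.ofReal κ := by
      refine (HC T _ F hT hFm hF0 hFB).trans ?_
      rw [hFp, ← ENNReal.ofReal_mul hC.le]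
      apply ENNReal.ofReal_le_ofReal
      rw [hκ0, mul_div_assoc', div_le_iff₀ (by positivity)]; nlinarith
    have hcont := etaF_cont hT hFm hF0 hFB
    have b3 := Hκ μ hμ hb (etaF N T F) _ hcont (etaF_nonneg hF0) (etaF_le hT hFm hF0 hFB) b1 b2
    have b4 : ENNReal.ofReal l * I ≤ ENNReal.ofReal M := by
      calc ENNReal.ofReal l * I = ∫⁻ v, V n v * ENNReal.ofReal (F v) ∂(nuT N T) := by
            rw [hI, ← lintegral_const_mul' _ _ ENNReal.ofReal_ne_top]
            congr 1; ext v
            rw [hoF, mul_left_comm]; congr 1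
            conv_lhs => rw [show q = 1 + (q - 1) by ring, ENNReal.rpow_add_of_nonneg _ _ zero_le_one (by linarith),
              ENNReal.rpow_one]
        _ ≤ ∫⁻ v, Upot N μ v * ENNReal.ofReal (F v) ∂(nuT N T) := by gcongr with v; exact hVU n v
        _ = ∫⁻ v, ∫⁻ y, ENNReal.ofReal (gk N v.1 (y - v.2)) * ENNReal.ofReal (F v) ∂μ ∂(nuT N T) := by
            congr 1; ext v
            rw [Upot, ← lintegral_mul_const' _ _ ENNReal.ofReal_ne_top]
            simp only [gk_sub_comm N v.1 v.2]
        _ = ∫⁻ y, ∫⁻ v, ENNReal.ofReal (gk N v.1 (y - v.2)) * ENNReal.ofReal (F v) ∂(nuT N T) ∂μ := by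
            apply lintegral_lintegral_swap
            have := gk_meas' N (f := fun z : (ℝ × Euc N) × Euc N => z.1.1) (g := fun z => z.2 - z.1.2)
              (by fun_prop) (by fun_prop)
            apply Measurable.aemeasurable
            simp only [Function.uncurry_def]
            fun_prop
        _ = ∫⁻ y, ENNReal.ofReal (etaF N T F y) ∂μ := by
            congr 1; ext y; rw [etaF_ofReal hFm hF0 hFB]
        _ = ENNReal.ofReal (∫ y, etaF N T F y ∂μ) := by
            rw [ofReal_integral_eq_lintegral_ofReal]
            · apply Integrable.of_bound hcont.aestronglyMeasurable (T * (l * (n:ℝ) ^ (q - 1)))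
              refine Eventually.of_forall fun y => ?_
              rw [norm_of_nonneg (etaF_nonneg hF0 y)]
              exact etaF_le hT hFm hF0 hFB y
            · exact Eventually.of_forall (etaF_nonneg hF0)
        _ ≤ ENNReal.ofReal M := ENNReal.ofReal_le_ofReal b3
    rw [← ENNReal.ofReal_toReal hItop, ← ENNReal.ofReal_mul hl0.le, ENNReal.ofReal_le_ofReal_iff hM0] at b4
    rw [← ENNReal.ofReal_toReal hItop]
    apply ENNReal.ofReal_le_ofReal
    have e1 : l * I.toReal = κ0 ^ (1 / p) * I.toReal ^ (1 / q) := by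
      rw [hl, div_rpow hκ00.le hIr.le, ← hpq, rpow_sub hIr, rpow_one]; field_simp
    rw [e1] at b4
    calc I.toReal = (I.toReal ^ (1 / q)) ^ q := by
          rw [← rpow_mul hIr.le, one_div_mul_cancel hq0.ne', rpow_one]
      _ ≤ _ := by
          gcongr
          rw [rpow_neg hκ00.le, ← div_eq_inv_mul, le_div_iff₀ (by positivity)]; linarith
  have lim : ∀ v, Tendsto (fun n => V n v ^ q) atTop (nhds (Upot N μ v ^ q)) := by
    intro v
    apply (ENNReal.continuous_rpow_const.tendsto _).comp
    have : Tendsto (fun n : ℕ => min (Upot N μ v) (n:ENNReal)) atTop (nhds (min (Upot N μ v) ⊤)) :=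
      tendsto_const_nhds.min ENNReal.tendsto_nat_nhds_top
    rw [min_eq_left le_top] at this
    apply this.congr'
    obtain ⟨n0, hn0⟩ := exists_nat_ge ‖v.2‖
    filter_upwards [eventually_ge_atTop n0] with n hn
    have : ‖v.2‖ ≤ (n:ℝ) := hn0.trans (by exact_mod_cast hn)
    simp [hV, indicator, this]
  calc ∫⁻ v, Upot N μ v ^ q ∂(nuT N T) = ∫⁻ v, liminf (fun n => V n v ^ q) atTop ∂(nuT N T) := by
        congr 1; ext v; rw [(lim v).liminf_eq]
    _ ≤ liminf (fun n => ∫⁻ v, V n v ^ q ∂(nuT N T)) atTop :=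
        lintegral_liminf_le fun n => by have := hVm n; fun_prop
    _ ≤ _ := by
        refine le_trans (liminf_le_liminf (Eventually.of_forall main)) ?_
        simp

/-- heat flow of a function -/
def psi (N : ℕ) (η : Euc N → ℝ) (a : ℝ) (y : Euc N) : ℝ := ∫ x, gk N a (y - x) * η x

def Dd (N : ℕ) (η : Euc N → ℝ) (v : ℝ × Euc N) : ENNReal :=
  ∫⁻ h, ENNReal.ofReal (gk N (7 * v.1) h) * ENNReal.ofReal |η (v.2 + h) - η v.2|

def Ee (N : ℕ) (η : Euc N → ℝ) (v : ℝ × Euc N) : ENNReal :=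
  ∫⁻ h, ENNReal.ofReal (gk N (7 * v.1) h) * ENNReal.ofReal |η (v.2 - h)|

lemma gk_int (N : ℕ) {a : ℝ} (ha : 0 < a) (y : Euc N) : Integrable fun x => gk N a (y - x) := by
  have hc : Continuous fun x => gk N a (y - x) := (gk_cont N a).comp (by fun_prop)
  refine ⟨hc.aestronglyMeasurable, ?_⟩
  rw [hasFiniteIntegral_iff_ofReal (Eventually.of_forall fun x => (gk_pos N ha _).le), lint_gk_sub N ha]
  simp

lemma gk_integral (N : ℕ) {a : ℝ} (ha : 0 < a) (y : Euc N) : ∫ x, gk N a (y - x) = 1 := by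
  rw [integral_eq_lintegral_of_nonneg_ae (Eventually.of_forall fun x => (gk_pos N ha _).le)
    (gk_int N ha y).1, lint_gk_sub N ha]
  simp

section
variable {N : ℕ} {η : Euc N → ℝ} {B : ℝ}

lemma psi_int (hη : Continuous η) (hB : ∀ x, |η x| ≤ B) {a : ℝ} (ha : 0 < a) (y : Euc N) :
    Integrable fun x => gk N a (y - x) * η x :=
  (gk_int N ha y).mul_bdd (c := B) hη.aestronglyMeasurable (Eventually.of_forall hB)

lemma psi_le (hη : Continuous η) (hB : ∀ x, |η x| ≤ B) {a : ℝ} (ha : 0 < a) (y : Euc N) :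
    |psi N η a y| ≤ B := by
  calc |psi N η a y| ≤ ∫ x, |gk N a (y - x) * η x| := abs_integral_le_integral_abs
    _ ≤ ∫ x, gk N a (y - x) * B := by
        apply integral_mono (psi_int hη hB ha y).abs ((gk_int N ha y).mul_const _)
        intro x
        simp only [abs_mul, abs_of_pos (gk_pos N ha _)]
        exact mul_le_mul_of_nonneg_left (hB x) (gk_pos N ha _).le
    _ = B := by rw [integral_mul_const, gk_integral N ha, one_mul]

lemma psi_meas (hη : Continuous η) (a : ℝ) : Measurable (psi N η a) := by
  apply StronglyMeasurable.measurable
  apply StronglyMeasurable.integral_prod_right (f := fun y x => gk N a (y - x) * η x)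
  apply Measurable.stronglyMeasurable
  have := gk_meas' N (f := fun z : Euc N × Euc N => a) (g := fun z => z.1 - z.2) (by fun_prop) (by fun_prop)
  have := hη.measurable
  simp only [Function.uncurry_def]
  fun_prop

lemma psi_dbl (hη : Continuous η) (hB : ∀ x, |η x| ≤ B) {τ s : ℝ} (hτ : 0 < τ) (hs : 0 < s) (y : Euc N) :
    Integrable (Function.uncurry fun w x => gk N τ (y - w) * gk N s (w - x) * η x)
      ((volume : Measure (Euc N)).prod volume) := by
  have m1 := gk_meas' N (f := fun z : Euc N × Euc N => τ) (g := fun z => y - z.1) (by fun_prop) (by fun_prop)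
  have m2 := gk_meas' N (f := fun z : Euc N × Euc N => s) (g := fun z => z.1 - z.2) (by fun_prop) (by fun_prop)
  have : Integrable (fun z : Euc N × Euc N => gk N τ (y - z.1) * gk N s (z.1 - z.2)) (volume.prod volume) := by
    refine ⟨(m1.mul m2).aestronglyMeasurable, ?_⟩
    rw [hasFiniteIntegral_iff_ofReal (Eventually.of_forall fun x => (mul_pos (gk_pos N hτ _) (gk_pos N hs _)).le),
      lintegral_prod _ (by fun_prop)]
    have : ∀ w, ∫⁻ x, ENNReal.ofReal (gk N τ (y - w) * gk N s (w - x)) = ENNReal.ofReal (gk N τ (y - w)) := by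
      intro w
      simp only [ENNReal.ofReal_mul (gk_pos N hτ _).le]
      rw [lintegral_const_mul' _ _ ENNReal.ofReal_ne_top, lint_gk_sub N hs, mul_one]
    simp only [this]
    rw [lint_gk_sub N hτ]; simp
  exact this.mul_bdd (c := B) (hη.comp continuous_snd).aestronglyMeasurable (Eventually.of_forall fun z => hB z.2)

lemma psi_semi (hη : Continuous η) (hB : ∀ x, |η x| ≤ B) {τ s : ℝ} (hτ : 0 < τ) (hs : 0 < s) (y : Euc N) :
    psi N η (τ + s) y = ∫ w, gk N τ (y - w) * psi N η s w := by
  have e : ∀ w, gk N τ (y - w) * psi N η s w = ∫ x, gk N τ (y - w) * gk N s (w - x) * η x := by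
    intro w
    simp only [mul_assoc]
    rw [integral_const_mul]; rfl
  simp only [e]
  rw [integral_integral_swap (psi_dbl hη hB hτ hs y), psi]
  congr 1; ext x
  rw [integral_mul_const]
  congr 1
  have hm : Continuous fun w => gk N τ (y - w) * gk N s (w - x) :=
    ((gk_cont N τ).comp (by fun_prop)).mul ((gk_cont N s).comp (by fun_prop))
  rw [integral_eq_lintegral_of_nonneg_ae
    (Eventually.of_forall fun w => (mul_pos (gk_pos N hτ _) (gk_pos N hs _)).le) hm.aestronglyMeasurable]
  simp only [ENNReal.ofReal_mul (gk_pos N hτ _).le]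
  rw [gk_semigroup N hτ hs, ENNReal.toReal_ofReal (gk_pos N (by linarith) _).le]

lemma psi_int2 (hη : Continuous η) (hB : ∀ x, |η x| ≤ B) {τ s : ℝ} (hτ : 0 < τ) (hs : 0 < s) (y : Euc N) :
    Integrable fun w => gk N τ (y - w) * psi N η s w :=
  (gk_int N hτ y).mul_bdd (c := B) (psi_meas hη s).aestronglyMeasurable (Eventually.of_forall (psi_le hη hB hs))

lemma psi_sub_le (hη : Continuous η) (hB : ∀ x, |η x| ≤ B) {s : ℝ} (hs : 0 < s) (w : Euc N) :
    ENNReal.ofReal |psi N η s w - η w| ≤ ∫⁻ h, ENNReal.ofReal (gk N s h) * ENNReal.ofReal |η (w + h) - η w| := by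
  have e : psi N η s w - η w = ∫ x, gk N s (w - x) * (η x - η w) := by
    simp only [mul_sub]
    rw [integral_sub (psi_int hη hB hs w) ((gk_int N hs w).mul_const _), integral_mul_const, gk_integral N hs,
      one_mul, psi]
  rw [e]
  refine (ofReal_abs_integral_le _ _).trans (le_of_eq ?_)
  rw [← lintegral_add_left_eq_self _ w]
  congr 1; ext h
  rw [abs_mul, abs_of_pos (gk_pos N hs _), ENNReal.ofReal_mul (gk_pos N hs _).le]
  simp [gk_neg]

lemma psi_abs_le {s : ℝ} (hs : 0 < s) (w : Euc N) :
    ENNReal.ofReal |psi N η s w| ≤ ∫⁻ h, ENNReal.ofReal (gk N s h) * ENNReal.ofReal |η (w - h)| := by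
  refine (ofReal_abs_integral_le _ _).trans (le_of_eq ?_)
  rw [← lintegral_sub_left_eq_self _ w]
  congr 1; ext h
  rw [abs_mul, abs_of_pos (gk_pos N hs _), ENNReal.ofReal_mul (gk_pos N hs _).le]
  simp

lemma gk_cmp_lint {τ s : ℝ} (hτ : 0 < τ) (h1 : τ ≤ s) (h2 : s ≤ 7 * τ) (f : Euc N → ENNReal) :
    ∫⁻ h, ENNReal.ofReal (gk N s h) * f h ≤
      ENNReal.ofReal (7 ^ ((N:ℝ) / 2)) * ∫⁻ h, ENNReal.ofReal (gk N (7 * τ) h) * f h := by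
  rw [← lintegral_const_mul' _ _ ENNReal.ofReal_ne_top]
  apply lintegral_mono; intro h
  simp only
  rw [← mul_assoc, ← ENNReal.ofReal_mul (by positivity)]
  gcongr
  exact gk_compare N hτ h1 h2 h

lemma Dd_meas (hη : Continuous η) : Measurable (Dd N η) := by
  apply Measurable.lintegral_prod_right' (f := fun z : (ℝ × Euc N) × Euc N =>
    ENNReal.ofReal (gk N (7 * z.1.1) z.2) * ENNReal.ofReal |η (z.1.2 + z.2) - η z.1.2|)
  have := gk_meas' N (f := fun z : (ℝ × Euc N) × Euc N => 7 * z.1.1) (g := fun z => z.2) (by fun_prop) (by fun_prop)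
  have := hη.measurable
  fun_prop

lemma Ee_meas (hη : Continuous η) : Measurable (Ee N η) := by
  apply Measurable.lintegral_prod_right' (f := fun z : (ℝ × Euc N) × Euc N =>
    ENNReal.ofReal (gk N (7 * z.1.1) z.2) * ENNReal.ofReal |η (z.1.2 - z.2)|)
  have := gk_meas' N (f := fun z : (ℝ × Euc N) × Euc N => 7 * z.1.1) (g := fun z => z.2) (by fun_prop) (by fun_prop)
  have := hη.measurable
  fun_prop

/-- pairing with the measure -/
def Ph (N : ℕ) (η : Euc N → ℝ) (μ : Measure (Euc N)) (a : ℝ) : ℝ := ∫ y, psi N η a y ∂μ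

lemma psi_intμ (μ : Measure (Euc N)) [IsFiniteMeasure μ] (hη : Continuous η) (hB : ∀ x, |η x| ≤ B)
    {a : ℝ} (ha : 0 < a) : Integrable (psi N η a) μ :=
  Integrable.of_bound (psi_meas hη a).aestronglyMeasurable B (Eventually.of_forall (psi_le hη hB ha))

lemma Ph_swap (μ : Measure (Euc N)) [SFinite μ] {τ : ℝ} {f : Euc N → ENNReal} (hf : Measurable f) :
    ∫⁻ y, ∫⁻ w, ENNReal.ofReal (gk N τ (y - w)) * f w ∂volume ∂μ = ∫⁻ w, Upot N μ (τ, w) * f w := by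
  have hm := gk_meas' N (f := fun z : Euc N × Euc N => τ) (g := fun z => z.1 - z.2) (by fun_prop) (by fun_prop)
  rw [lintegral_lintegral_swap (by simp only [Function.uncurry_def]; fun_prop)]
  congr 1; ext w
  have hm2 := gk_meas' N (f := fun z : Euc N => τ) (g := fun z => z - w) (by fun_prop) (by fun_prop)
  rw [lintegral_mul_const _ hm2.ennreal_ofReal, Upot]
  simp only [gk_sub_comm N τ w]

lemma Ph_diff (μ : Measure (Euc N)) [IsFiniteMeasure μ] (hη : Continuous η) (hB : ∀ x, |η x| ≤ B)
    {τ s : ℝ} (hτ : 0 < τ) (h1 : τ ≤ s) (h2 : s ≤ 7 * τ) :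
    ENNReal.ofReal |Ph N η μ (τ + s) - Ph N η μ τ| ≤
      ENNReal.ofReal (7 ^ ((N:ℝ) / 2)) * ∫⁻ w, Upot N μ (τ, w) * Dd N η (τ, w) := by
  have hs : 0 < s := by linarith
  have hD : Measurable fun w => Dd N η (τ, w) := (Dd_meas hη).comp (by fun_prop)
  rw [Ph, Ph, ← integral_sub (psi_intμ μ hη hB (by linarith)) (psi_intμ μ hη hB hτ),
    ← Ph_swap μ hD, ← lintegral_const_mul' _ _ ENNReal.ofReal_ne_top]
  refine (ofReal_abs_integral_le _ _).trans ?_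
  apply lintegral_mono; intro y
  simp only
  rw [psi_semi hη hB hτ hs, psi, ← integral_sub (psi_int2 hη hB hτ hs y) (psi_int hη hB hτ y),
    ← lintegral_const_mul' _ _ ENNReal.ofReal_ne_top]
  refine (ofReal_abs_integral_le _ _).trans ?_
  apply lintegral_mono; intro w
  simp only
  rw [← mul_sub, abs_mul, abs_of_pos (gk_pos N hτ _), ENNReal.ofReal_mul (gk_pos N hτ _).le, mul_left_comm]
  gcongr
  exact (psi_sub_le hη hB hs w).trans (gk_cmp_lint hτ h1 h2 _)

lemma Ph_abs (μ : Measure (Euc N)) [IsFiniteMeasure μ] (hη : Continuous η) (hB : ∀ x, |η x| ≤ B)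
    {τ s : ℝ} (hτ : 0 < τ) (h1 : τ ≤ s) (h2 : s ≤ 7 * τ) :
    ENNReal.ofReal |Ph N η μ (τ + s)| ≤
      ENNReal.ofReal (7 ^ ((N:ℝ) / 2)) * ∫⁻ w, Upot N μ (τ, w) * Ee N η (τ, w) := by
  have hs : 0 < s := by linarith
  have hD : Measurable fun w => Ee N η (τ, w) := (Ee_meas hη).comp (by fun_prop)
  rw [Ph, ← Ph_swap μ hD, ← lintegral_const_mul' _ _ ENNReal.ofReal_ne_top]
  refine (ofReal_abs_integral_le _ _).trans ?_
  apply lintegral_mono; intro y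
  simp only
  rw [psi_semi hη hB hτ hs, ← lintegral_const_mul' _ _ ENNReal.ofReal_ne_top]
  refine (ofReal_abs_integral_le _ _).trans ?_
  apply lintegral_mono; intro w
  simp only
  rw [abs_mul, abs_of_pos (gk_pos N hτ _), ENNReal.ofReal_mul (gk_pos N hτ _).le, mul_left_comm]
  gcongr
  exact (psi_abs_le hs w).trans (gk_cmp_lint hτ h1 h2 _)

lemma gk_first_moment (N : ℕ) {a : ℝ} (ha : 0 < a) :
    ∫⁻ h : Euc N, ENNReal.ofReal (gk N a h) * ENNReal.ofReal ‖h‖ ≤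
      ENNReal.ofReal (2 ^ ((N:ℝ) / 2) * √(8 * a)) := by
  have key : ∀ h : Euc N, gk N a h * ‖h‖ ≤ (2 ^ ((N:ℝ) / 2) * √(8 * a)) * gk N (2 * a) h := by
    intro h
    set r := √(8 * a) with hr
    have hr0 : 0 < r := by positivity
    have hr2 : r ^ 2 = 8 * a := Real.sq_sqrt (by positivity)
    have h1 : ‖h‖ * rexp (-‖h‖ ^ 2 / (8 * a)) ≤ r := by
      rw [← hr2, neg_div, exp_neg, ← div_eq_mul_inv, div_le_iff₀ (exp_pos _), ← div_pow]
      have := add_one_le_exp ((‖h‖ / r) ^ 2)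
      have h3 : ‖h‖ / r ≤ (‖h‖ / r) ^ 2 + 1 := by nlinarith [sq_nonneg (‖h‖ / r - 1), sq_nonneg (‖h‖ / r)]
      calc ‖h‖ = r * (‖h‖ / r) := by field_simp
        _ ≤ _ := by gcongr; linarith
    have h2 : rexp (-‖h‖ ^ 2 / (4 * a)) = rexp (-‖h‖ ^ 2 / (8 * a)) * rexp (-‖h‖ ^ 2 / (4 * (2 * a))) := by
      rw [← exp_add]; congr 1; field_simp; ring
    have h3 : (4 * π * a) ^ (-(N:ℝ) / 2) = 2 ^ ((N:ℝ) / 2) * (4 * π * (2 * a)) ^ (-(N:ℝ) / 2) := by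
      rw [show 4 * π * (2 * a) = 2 * (4 * π * a) by ring, mul_rpow (x := 2) (by norm_num) (by positivity), ← mul_assoc,
        ← rpow_add two_pos, neg_div, add_neg_cancel, rpow_zero, one_mul]
    unfold gk
    rw [h2, h3]
    have hc : 0 ≤ 2 ^ ((N:ℝ) / 2) * (4 * π * (2 * a)) ^ (-(N:ℝ) / 2) * rexp (-‖h‖ ^ 2 / (4 * (2 * a))) := by positivity
    nlinarith [mul_le_mul_of_nonneg_left h1 hc]
  calc _ ≤ ∫⁻ h : Euc N, ENNReal.ofReal (2 ^ ((N:ℝ) / 2) * √(8 * a)) * ENNReal.ofReal (gk N (2 * a) h) := by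
        apply lintegral_mono; intro h; simp only
        rw [← ENNReal.ofReal_mul (gk_pos N ha _).le, ← ENNReal.ofReal_mul (by positivity)]
        exact ENNReal.ofReal_le_ofReal (key h)
    _ = _ := by rw [lintegral_const_mul' _ _ ENNReal.ofReal_ne_top, lint_gk N (by linarith), mul_one]

lemma Ph_lim (μ : Measure (Euc N)) [IsFiniteMeasure μ] (hη : Continuous η) (hB : ∀ x, |η x| ≤ B)
    {L : NNReal} (hL : LipschitzWith L η) {a : ℕ → ℝ} (ha : ∀ n, 0 < a n) (hlim : Tendsto a atTop (nhds 0)) :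
    Tendsto (fun n => Ph N η μ (a n)) atTop (nhds (∫ x, η x ∂μ)) := by
  apply tendsto_integral_of_dominated_convergence (fun _ => B)
  · intro n; exact (psi_meas hη _).aestronglyMeasurable
  · exact integrable_const _
  · intro n; exact Eventually.of_forall (psi_le hη hB (ha n))
  refine Eventually.of_forall fun x => ?_
  rw [tendsto_iff_dist_tendsto_zero]
  have b : ∀ n, dist (psi N η (a n) x) (η x) ≤ L * (2 ^ ((N:ℝ) / 2) * √(8 * a n)) := by
    intro n
    rw [Real.dist_eq]
    have h := psi_sub_le hη hB (ha n) x
    have h2 : ∫⁻ h, ENNReal.ofReal (gk N (a n) h) * ENNReal.ofReal |η (x + h) - η x| ≤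
        ENNReal.ofReal (L * (2 ^ ((N:ℝ) / 2) * √(8 * a n))) := by
      calc _ ≤ ∫⁻ h : Euc N, ENNReal.ofReal L * (ENNReal.ofReal (gk N (a n) h) * ENNReal.ofReal ‖h‖) := by
            apply lintegral_mono; intro h; simp only
            rw [mul_left_comm, ← ENNReal.ofReal_mul (NNReal.coe_nonneg L)]
            gcongr
            have := hL.dist_le_mul (x + h) x
            simpa [Real.dist_eq] using this
        _ = ENNReal.ofReal L * ∫⁻ h : Euc N, (ENNReal.ofReal (gk N (a n) h) * ENNReal.ofReal ‖h‖) :=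
            lintegral_const_mul' _ _ ENNReal.ofReal_ne_top
        _ ≤ _ := by
            rw [ENNReal.ofReal_mul (NNReal.coe_nonneg L)]; gcongr; exact gk_first_moment N (ha n)
    exact (ENNReal.ofReal_le_ofReal_iff (by positivity)).1 (h.trans h2)
  refine squeeze_zero (fun _ => dist_nonneg) b ?_
  have : Tendsto (fun n => L * (2 ^ ((N:ℝ) / 2) * √(8 * a n))) atTop (nhds (L * (2 ^ ((N:ℝ) / 2) * √(8 * 0)))) :=
    ((((hlim.const_mul 8)).sqrt).const_mul _).const_mul _
  simpa using this
end

lemma time_int (N : ℕ) {p : ℝ} (hp : 1 < p) : ∃ C : ℝ, 0 < C ∧ ∀ h : Euc N, h ≠ 0 →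
    ∫⁻ τ in Ioi (0:ℝ), ENNReal.ofReal (τ ^ (-p) * gk N (7 * τ) h) ≤
      ENNReal.ofReal (C * ‖h‖ ^ (-((N:ℝ) + 2 * (p - 1)))) := by
  obtain ⟨n, hn⟩ := exists_nat_ge (p + (N:ℝ) / 2)
  set b : ℝ := (4 * π * 7) ^ (-(N:ℝ) / 2) with hb
  have hb0 : 0 < b := by positivity
  set α : ℝ := n - p - (N:ℝ) / 2 with hα
  set β : ℝ := -p - (N:ℝ) / 2 with hβ
  have hN0 : (0:ℝ) ≤ N := by positivity
  have hα0 : 0 ≤ α := by linarith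
  have hβ0 : β < -1 := by linarith
  have hβ1 : 0 < -β - 1 := by linarith
  set A : ℝ := n.factorial * 28 ^ n * b with hA
  have hA0 : 0 < A := by positivity
  refine ⟨A / (α + 1) + b / (-β - 1), by positivity, fun h hh => ?_⟩
  set r := ‖h‖ with hr
  have hr0 : 0 < r := norm_pos_iff.2 hh
  have e0 : ∀ τ : ℝ, 0 < τ → τ ^ (-p) * gk N (7 * τ) h = b * τ ^ β * rexp (-(r ^ 2 / (28 * τ))) := by
    intro τ hτ
    unfold gk
    rw [show 4 * π * (7 * τ) = (4 * π * 7) * τ by ring, mul_rpow (by positivity) hτ.le, hβ,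
      sub_eq_add_neg, rpow_add hτ, ← hb, ← hr, neg_div, neg_div,
      show 4 * (7 * τ) = 28 * τ by ring]
    ring
  have := aux_1d (f := fun τ => ENNReal.ofReal (τ ^ (-p) * gk N (7 * τ) h)) (A := A * r ^ (-(2 * (n:ℝ)))) (B := b)
    (α := α) (β := β) (ρ := r ^ 2) (by positivity) (by positivity) hb0.le (by linarith) hβ0
    (by
      intro τ hτ _
      apply ENNReal.ofReal_le_ofReal
      rw [e0 τ hτ]
      have hx : 0 < r ^ 2 / (28 * τ) := by positivity
      have h1 := pow_div_factorial_le_exp _ hx.le n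
      have h2 : rexp (-(r ^ 2 / (28 * τ))) ≤ n.factorial * (28 * τ) ^ n / r ^ (2 * n) := by
        rw [exp_neg, inv_le_comm₀ (exp_pos _) (by positivity)]
        refine le_trans (le_of_eq ?_) h1
        rw [inv_div, div_pow, ← pow_mul]; field_simp
      calc b * τ ^ β * rexp (-(r ^ 2 / (28 * τ))) ≤ b * τ ^ β * (n.factorial * (28 * τ) ^ n / r ^ (2 * n)) := by gcongr
        _ = _ := by
          have e1 : τ ^ α = τ ^ n * τ ^ β := by
            rw [← rpow_natCast, ← rpow_add hτ]; congr 1; rw [hα, hβ]; ring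
          have e2 : r ^ (-(2 * (n:ℝ))) = (r ^ (2 * n))⁻¹ := by
            rw [rpow_neg hr0.le, ← rpow_natCast]; push_cast; rfl
          rw [e1, e2, hA, mul_pow]; ring)
    (by
      intro τ hτ
      have hτ0 : 0 < τ := lt_trans (by positivity) hτ
      apply ENNReal.ofReal_le_ofReal
      rw [e0 τ hτ0]
      apply mul_le_of_le_one_right (by positivity)
      rw [exp_le_one_iff]
      have : 0 < r ^ 2 / (28 * τ) := by positivity
      linarith)
  refine this.trans (le_of_eq ?_)
  congr 1
  have e3 : (r ^ 2) ^ (α + 1) = r ^ (2 * (n:ℝ)) * r ^ (-((N:ℝ) + 2 * (p - 1))) := by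
    rw [← rpow_natCast, ← rpow_mul hr0.le, ← rpow_add hr0]; congr 1; rw [hα]; push_cast; ring
  have e4 : (r ^ 2) ^ (β + 1) = r ^ (-((N:ℝ) + 2 * (p - 1))) := by
    rw [← rpow_natCast, ← rpow_mul hr0.le]; congr 1; rw [hβ]; push_cast; ring
  have e5 : r ^ (-(2 * (n:ℝ))) * r ^ (2 * (n:ℝ)) = 1 := by rw [← rpow_add hr0]; simp
  rw [e3, e4]
  calc _ = (r ^ (-(2 * (n:ℝ))) * r ^ (2 * (n:ℝ))) * (A / (α + 1) * r ^ (-((N:ℝ) + 2 * (p - 1)))) +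
      b / (-β - 1) * r ^ (-((N:ℝ) + 2 * (p - 1))) := by ring
    _ = _ := by rw [e5]; ring

section
variable {N : ℕ} {η : Euc N → ℝ} {B : ℝ}

lemma Ee_Lp {T p : ℝ} (hp : 1 < p) (hη : Continuous η) :
    ∫⁻ v, Ee N η v ^ p ∂(nuT N T) ≤ ENNReal.ofReal T * ∫⁻ x, ENNReal.ofReal (|η x| ^ p) := by
  have hE := Ee_meas hη
  have hm := hη.measurable
  rw [nuT_lint N T (by fun_prop)]
  calc _ ≤ ∫⁻ t in Ioc 0 T, ∫⁻ x, ENNReal.ofReal (|η x| ^ p) := by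
        apply setLIntegral_mono measurable_const
        intro t ht
        have := moll_ineq N hp (φ := fun s => ENNReal.ofReal (gk N (7 * t) s)) (f := fun x => ENNReal.ofReal |η x|)
          ((gk_cont N _).measurable.ennreal_ofReal) (lint_gk N (by linarith [ht.1])) (by fun_prop)
        refine this.trans (le_of_eq ?_)
        congr 1; ext x
        rw [ENNReal.ofReal_rpow_of_nonneg (abs_nonneg _) (by linarith)]
    _ = _ := by rw [setLIntegral_const]; simp [mul_comm]

lemma swap3 (N : ℕ) (T : ℝ) {K : ℝ × Euc N → ENNReal} {Δ : Euc N × Euc N → ENNReal} (hK : Measurable K)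
    (hΔ : Measurable Δ) : ∫⁻ v, ∫⁻ h, K (v.1, h) * Δ (v.2, h) ∂volume ∂(nuT N T) =
      ∫⁻ x, ∫⁻ h, (∫⁻ t in Ioc 0 T, K (t, h)) * Δ (x, h) := by
  have c1 : Measurable fun z : (ℝ × Euc N) × Euc N => K (z.1.1, z.2) * Δ (z.1.2, z.2) := by fun_prop
  have c3 : Measurable fun v : ℝ × Euc N => ∫⁻ h, K (v.1, h) * Δ (v.2, h) :=
    Measurable.lintegral_prod_right' (f := fun z : (ℝ × Euc N) × Euc N => K (z.1.1, z.2) * Δ (z.1.2, z.2)) c1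
  rw [nuT_lint N T c3, lintegral_lintegral_swap (f := fun t x => ∫⁻ h, K (t, h) * Δ (x, h)) c3.aemeasurable]
  congr 1; ext x
  rw [lintegral_lintegral_swap (by fun_prop)]
  congr 1; ext h
  rw [lintegral_mul_const _ (by fun_prop)]

lemma Dd_Lp (N : ℕ) {p : ℝ} (hp : 1 < p) : ∃ C : ℝ, 0 < C ∧ ∀ (T : ℝ) (η : Euc N → ℝ), Continuous η →
    ∫⁻ v, (ENNReal.ofReal (1 / v.1) * Dd N η v) ^ p ∂(nuT N T) ≤ ENNReal.ofReal C * bes N p η := by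
  obtain ⟨C, hC, H⟩ := time_int N hp
  refine ⟨C, hC, fun T η hη => ?_⟩
  have hp0 : 0 < p := by linarith
  have hm := hη.measurable
  have hKm : Measurable fun z : ℝ × Euc N => ENNReal.ofReal (z.1 ^ (-p) * gk N (7 * z.1) z.2) := by
    have := gk_meas' N (f := fun z : ℝ × Euc N => 7 * z.1) (g := fun z => z.2) (by fun_prop) (by fun_prop)
    exact Measurable.ennreal_ofReal ((by fun_prop : Measurable fun z : ℝ × Euc N => z.1 ^ (-p)).mul this)
  have hΔm : Measurable fun z : Euc N × Euc N => ENNReal.ofReal |η (z.1 + z.2) - η z.1| ^ p := by fun_prop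
  have s1 : ∫⁻ v, (ENNReal.ofReal (1 / v.1) * Dd N η v) ^ p ∂(nuT N T) ≤
      ∫⁻ v, ∫⁻ h, ENNReal.ofReal (v.1 ^ (-p) * gk N (7 * v.1) h) *
        ENNReal.ofReal |η (v.2 + h) - η v.2| ^ p ∂volume ∂(nuT N T) := by
    apply lintegral_mono_ae
    filter_upwards [nuT_pos N T] with v hv
    have hv1 := hv.1
    have hj := jensen_w (volume : Measure (Euc N)) hp (K := fun h => ENNReal.ofReal (gk N (7 * v.1) h))
      (F := fun h => ENNReal.ofReal |η (v.2 + h) - η v.2|)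
      ((gk_cont N _).measurable.ennreal_ofReal.aemeasurable) (by fun_prop)
    rw [lint_gk N (by linarith), ENNReal.one_rpow, one_mul] at hj
    rw [ENNReal.mul_rpow_of_nonneg _ _ hp0.le]
    calc _ ≤ ENNReal.ofReal (1 / v.1) ^ p * _ := mul_le_mul_right hj _
      _ = _ := by
        rw [ENNReal.ofReal_rpow_of_nonneg (by positivity) hp0.le, ← lintegral_const_mul' _ _ ENNReal.ofReal_ne_top]
        congr 1; ext h
        rw [← mul_assoc, ← ENNReal.ofReal_mul (by positivity), one_div, inv_rpow hv1.le, rpow_neg hv1.le]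
  refine s1.trans ?_
  rw [swap3 N T hKm hΔm, bes, ← lintegral_const_mul' _ _ ENNReal.ofReal_ne_top]
  apply lintegral_mono; intro x
  simp only
  rw [← lintegral_const_mul' _ _ ENNReal.ofReal_ne_top]
  apply lintegral_mono; intro h
  simp only
  by_cases hh : h = 0
  · simp [hh, hp0]
  calc _ ≤ ENNReal.ofReal (C * ‖h‖ ^ (-((N:ℝ) + 2 * (p - 1)))) * ENNReal.ofReal |η (x + h) - η x| ^ p := by
        gcongr
        refine le_trans (lintegral_mono_set ?_) (H h hh)
        intro t ht; exact ht.1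
    _ = _ := by
        rw [ENNReal.ofReal_rpow_of_nonneg (abs_nonneg _) hp0.le, ← ENNReal.ofReal_mul (by positivity),
          ← ENNReal.ofReal_mul (by positivity)]
        congr 1; ring
end

lemma const_le_avg {c : ENNReal} {b : ℝ} (hb : 0 < b) {f : ℝ → ENNReal} 
    (h : ∀ τ, b / 2 < τ → τ ≤ b → c ≤ ENNReal.ofReal (b / 2) * f τ) :
    c ≤ ∫⁻ τ in Ioc (b / 2) b, f τ := by
  have h1 : ∫⁻ τ in Ioc (b / 2) b, (ENNReal.ofReal (b / 2))⁻¹ * c = c := by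
    rw [setLIntegral_const, Real.volume_Ioc, show b - b / 2 = b / 2 by ring, mul_right_comm,
      ENNReal.inv_mul_cancel (by simpa using hb) ENNReal.ofReal_ne_top, one_mul]
  rw [← h1]
  apply setLIntegral_mono' measurableSet_Ioc
  intro τ hτ
  rw [ENNReal.inv_mul_le_iff (by simpa using hb) ENNReal.ofReal_ne_top]
  exact h τ hτ.1 hτ.2

section
variable {N : ℕ} {η : Euc N → ℝ} {B : ℝ}

lemma telesc (μ : Measure (Euc N)) [IsFiniteMeasure μ] (hη : Continuous η) (hB : ∀ x, |η x| ≤ B)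
    {T : ℝ} (hT : 0 < T) (n : ℕ) :
    ENNReal.ofReal |Ph N η μ (4 * (T / 2 ^ n))| ≤ ENNReal.ofReal |Ph N η μ (4 * T)| +
      ∫⁻ τ in Ioc (T / 2 ^ n) T, ENNReal.ofReal (4 * 7 ^ ((N:ℝ) / 2) / τ) *
        ∫⁻ w, Upot N μ (τ, w) * Dd N η (τ, w) := by
  induction n with
  | zero => simp
  | succ n ih =>
    set b := T / 2 ^ n with hb
    have hb0 : 0 < b := by positivity
    have hbT : b ≤ T := div_le_self hT.le (one_le_pow₀ (by norm_num))
    have hb2 : T / 2 ^ (n + 1) = b / 2 := by rw [hb, pow_succ]; field_simp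
    rw [hb2]
    have hU : Ioc (b / 2) T = Ioc (b / 2) b ∪ Ioc b T := (Ioc_union_Ioc_eq_Ioc (by linarith) hbT).symm
    rw [hU, lintegral_union measurableSet_Ioc (Ioc_disjoint_Ioc_of_le le_rfl)]
    have key := const_le_avg (c := ENNReal.ofReal |Ph N η μ (4 * (b / 2)) - Ph N η μ (4 * b)|) hb0
      (f := fun τ => ENNReal.ofReal (4 * 7 ^ ((N:ℝ) / 2) / τ) *
        ∫⁻ w, Upot N μ (τ, w) * Dd N η (τ, w)) (by
        intro τ h1 h2
        have hτ : 0 < τ := by linarith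
        have d1 := Ph_diff μ hη hB (τ := τ) (s := 2 * b - τ) hτ (by linarith) (by linarith)
        have d2 := Ph_diff μ hη hB (τ := τ) (s := 4 * b - τ) hτ (by linarith) (by linarith)
        rw [show τ + (2 * b - τ) = 4 * (b / 2) by ring] at d1
        rw [show τ + (4 * b - τ) = 4 * b by ring] at d2
        set J := ∫⁻ w, Upot N μ (τ, w) * Dd N η (τ, w)
        calc ENNReal.ofReal |Ph N η μ (4 * (b / 2)) - Ph N η μ (4 * b)|
            ≤ ENNReal.ofReal (|Ph N η μ (4 * (b / 2)) - Ph N η μ τ| + |Ph N η μ (4 * b) - Ph N η μ τ|) := by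
              apply ENNReal.ofReal_le_ofReal
              rw [abs_sub_comm (Ph N η μ (4 * b))]
              exact abs_sub_le _ _ _
          _ = _ := ENNReal.ofReal_add (abs_nonneg _) (abs_nonneg _)
          _ ≤ ENNReal.ofReal (7 ^ ((N:ℝ) / 2)) * J + ENNReal.ofReal (7 ^ ((N:ℝ) / 2)) * J := by gcongr
          _ = ENNReal.ofReal (2 * 7 ^ ((N:ℝ) / 2)) * J := by
              rw [← add_mul, ← ENNReal.ofReal_add (by positivity) (by positivity), two_mul]
          _ ≤ ENNReal.ofReal (b / 2) * (ENNReal.ofReal (4 * 7 ^ ((N:ℝ) / 2) / τ) * J) := by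
              rw [← mul_assoc, ← ENNReal.ofReal_mul (by positivity)]
              refine mul_le_mul_left (ENNReal.ofReal_le_ofReal ?_) _
              rw [mul_div_assoc', le_div_iff₀ hτ]
              have : 0 < (7:ℝ) ^ ((N:ℝ) / 2) := by positivity
              nlinarith)
    calc ENNReal.ofReal |Ph N η μ (4 * (b / 2))| ≤
        ENNReal.ofReal (|Ph N η μ (4 * (b / 2)) - Ph N η μ (4 * b)| + |Ph N η μ (4 * b)|) := by
          apply ENNReal.ofReal_le_ofReal
          have := abs_add_le (Ph N η μ (4 * (b / 2)) - Ph N η μ (4 * b)) (Ph N η μ (4 * b))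
          simpa using this
      _ = _ := ENNReal.ofReal_add (abs_nonneg _) (abs_nonneg _)
      _ ≤ _ := add_le_add key ih
      _ = _ := by ring

lemma Ph_zero (μ : Measure (Euc N)) [IsFiniteMeasure μ] (hη : Continuous η) (hB : ∀ x, |η x| ≤ B)
    {T : ℝ} (hT : 0 < T) :
    ENNReal.ofReal |Ph N η μ (4 * T)| ≤ ∫⁻ τ in Ioc 0 T, ENNReal.ofReal (2 * 7 ^ ((N:ℝ) / 2) / T) *
        ∫⁻ w, Upot N μ (τ, w) * Ee N η (τ, w) := by
  refine (const_le_avg hT (f := fun τ => ENNReal.ofReal (2 * 7 ^ ((N:ℝ) / 2) / T) *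
        ∫⁻ w, Upot N μ (τ, w) * Ee N η (τ, w)) ?_).trans (lintegral_mono_set (Ioc_subset_Ioc_left (by linarith)))
  intro τ h1 h2
  have hτ : 0 < τ := by linarith
  have d2 := Ph_abs μ hη hB (τ := τ) (s := 4 * T - τ) hτ (by linarith) (by linarith)
  rw [show τ + (4 * T - τ) = 4 * T by ring] at d2
  refine d2.trans (le_of_eq ?_)
  rw [← mul_assoc, ← ENNReal.ofReal_mul (by positivity)]
  congr 2; field_simp

lemma pair_bound (μ : Measure (Euc N)) [IsFiniteMeasure μ] (hη : Continuous η) (hB : ∀ x, |η x| ≤ B)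
    {L : NNReal} (hL : LipschitzWith L η) {T : ℝ} (hT : 0 < T) :
    ENNReal.ofReal |∫ x, η x ∂μ| ≤
      ENNReal.ofReal (2 * 7 ^ ((N:ℝ) / 2) / T) * ∫⁻ v, Upot N μ v * Ee N η v ∂(nuT N T) +
      ENNReal.ofReal (4 * 7 ^ ((N:ℝ) / 2)) *
        ∫⁻ v, Upot N μ v * (ENNReal.ofReal (1 / v.1) * Dd N η v) ∂(nuT N T) := by
  have hU := Upot_meas N μ
  have hD := Dd_meas hη
  have hE := Ee_meas hη
  have hlim : Tendsto (fun n : ℕ => 4 * (T / 2 ^ n)) atTop (nhds 0) := by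
    have : Tendsto (fun n : ℕ => 4 * T * (1 / 2 : ℝ) ^ n) atTop (nhds (4 * T * 0)) :=
      (tendsto_pow_atTop_nhds_zero_of_lt_one (by norm_num) (by norm_num)).const_mul _
    rw [mul_zero] at this
    refine this.congr fun n => ?_
    rw [one_div_pow]; ring
  have h := Ph_lim μ hη hB hL (a := fun n => 4 * (T / 2 ^ n)) (fun n => by positivity) hlim
  have h' : Tendsto (fun n : ℕ => ENNReal.ofReal |Ph N η μ (4 * (T / 2 ^ n))|) atTop
      (nhds (ENNReal.ofReal |∫ x, η x ∂μ|)) := (ENNReal.continuous_ofReal.tendsto _).comp h.abs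
  refine le_of_tendsto' h' fun n => (telesc μ hη hB hT n).trans (add_le_add ?_ ?_)
  · refine (Ph_zero μ hη hB hT).trans (le_of_eq ?_)
    rw [nuT_lint N T (by fun_prop), ← lintegral_const_mul' _ _ ENNReal.ofReal_ne_top]
  · refine (lintegral_mono_set (Ioc_subset_Ioc_left (by positivity : 0 ≤ T / 2 ^ n))).trans ?_
    rw [nuT_lint N T (by fun_prop), ← lintegral_const_mul' _ _ ENNReal.ofReal_ne_top]
    apply setLIntegral_mono' measurableSet_Ioc
    intro τ hτ
    have hτ0 := hτ.1
    rw [← mul_one_div, ENNReal.ofReal_mul (by positivity), mul_assoc]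
    gcongr
    rw [← lintegral_const_mul' _ _ ENNReal.ofReal_ne_top]
    apply le_of_eq; congr 1; ext w; ring
end

lemma lowerB (N : ℕ) {q T : ℝ} (hq2 : 2 < q) (hT : 0 < T) : ∃ C : ℝ, 0 < C ∧
    ∀ (μ : Measure (Euc N)), IsFiniteMeasure μ → ∀ η : Euc N → ℝ, ContDiff ℝ (⊤ : ℕ∞) η → HasCompactSupport η →
      ENNReal.ofReal |∫ x, η x ∂μ| ≤ ENNReal.ofReal C * (∫⁻ v, Upot N μ v ^ q ∂(nuT N T)) ^ (1 / q) *
        ((∫⁻ x, ENNReal.ofReal (|η x| ^ (q / (q - 1)))) ^ (1 / (q / (q - 1))) +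
          (bes N (q / (q - 1)) η) ^ (1 / (q / (q - 1)))) := by
  obtain ⟨a1, a2, a3, a4⟩ := q_facts hq2
  obtain ⟨C, hC, H⟩ := Dd_Lp N a1
  set p := q / (q - 1) with hp
  have hp0 : 0 < p := by linarith
  have hip : 0 ≤ 1 / p := by positivity
  have hpq : q.HolderConjugate p := Real.HolderConjugate.conjExponent (by linarith)
  set c1 := 2 * 7 ^ ((N:ℝ) / 2) / T * T ^ (1 / p) with hc1
  set c2 := 4 * 7 ^ ((N:ℝ) / 2) * C ^ (1 / p) with hc2
  have hc10 : 0 < c1 := by positivity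
  have hc20 : 0 < c2 := by positivity
  refine ⟨c1 + c2, by positivity, fun μ hμ η hs hc => ?_⟩
  have hη := hs.continuous
  obtain ⟨L, hL⟩ := ContDiff.lipschitzWith_of_hasCompactSupport (𝕂 := ℝ) hc hs (by simp)
  obtain ⟨B, hB⟩ := hc.exists_bound_of_continuous hη
  refine (pair_bound μ hη hB hL hT).trans ?_
  have hU := Upot_meas N μ
  have hD := Dd_meas hη
  have hE := Ee_meas hη
  set A := (∫⁻ v, Upot N μ v ^ q ∂(nuT N T)) ^ (1 / q) with hA
  set X := ∫⁻ x, ENNReal.ofReal (|η x| ^ p) with hX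
  have e1 : ∫⁻ v, Upot N μ v * Ee N η v ∂(nuT N T) ≤ A * (ENNReal.ofReal (T ^ (1 / p)) * X ^ (1 / p)) := by
    refine (ENNReal.lintegral_mul_le_Lp_mul_Lq (nuT N T) hpq hU.aemeasurable hE.aemeasurable).trans ?_
    refine mul_le_mul_right ?_ _
    calc _ ≤ (ENNReal.ofReal T * X) ^ (1 / p) := ENNReal.rpow_le_rpow (Ee_Lp a1 hη) hip
      _ = _ := by rw [ENNReal.mul_rpow_of_nonneg _ _ hip, ENNReal.ofReal_rpow_of_pos hT]
  have e2 : ∫⁻ v, Upot N μ v * (ENNReal.ofReal (1 / v.1) * Dd N η v) ∂(nuT N T) ≤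
      A * (ENNReal.ofReal (C ^ (1 / p)) * bes N p η ^ (1 / p)) := by
    refine (ENNReal.lintegral_mul_le_Lp_mul_Lq (nuT N T) hpq hU.aemeasurable
      (g := fun v => ENNReal.ofReal (1 / v.1) * Dd N η v) (by fun_prop)).trans ?_
    refine mul_le_mul_right ?_ _
    calc _ ≤ (ENNReal.ofReal C * bes N p η) ^ (1 / p) := ENNReal.rpow_le_rpow (H T η hη) hip
      _ = _ := by rw [ENNReal.mul_rpow_of_nonneg _ _ hip, ENNReal.ofReal_rpow_of_pos hC]
  calc _ ≤ ENNReal.ofReal (2 * 7 ^ ((N:ℝ) / 2) / T) * (A * (ENNReal.ofReal (T ^ (1 / p)) * X ^ (1 / p))) +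
        ENNReal.ofReal (4 * 7 ^ ((N:ℝ) / 2)) * (A * (ENNReal.ofReal (C ^ (1 / p)) * bes N p η ^ (1 / p))) := by
        gcongr
    _ = ENNReal.ofReal c1 * (A * X ^ (1 / p)) + ENNReal.ofReal c2 * (A * bes N p η ^ (1 / p)) := by
        have k1 : ENNReal.ofReal c1 = ENNReal.ofReal (2 * 7 ^ ((N:ℝ) / 2) / T) * ENNReal.ofReal (T ^ (1 / p)) :=
          ENNReal.ofReal_mul (by positivity)
        have k2 : ENNReal.ofReal c2 = ENNReal.ofReal (4 * 7 ^ ((N:ℝ) / 2)) * ENNReal.ofReal (C ^ (1 / p)) :=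
          ENNReal.ofReal_mul (by positivity)
        rw [k1, k2]; ring
    _ ≤ ENNReal.ofReal (c1 + c2) * (A * X ^ (1 / p)) + ENNReal.ofReal (c1 + c2) * (A * bes N p η ^ (1 / p)) := by
        gcongr <;> linarith
    _ = _ := by ring

lemma bes_finite (N : ℕ) (hN : 1 ≤ N) {p : ℝ} (hp : 1 < p) (hp2 : p < 2) {η : Euc N → ℝ}
    (hs : ContDiff ℝ (⊤ : ℕ∞) η) (hc : HasCompactSupport η) : bes N p η ≠ ⊤ := by
  have hη := hs.continuous
  obtain ⟨L, hL⟩ := ContDiff.lipschitzWith_of_hasCompactSupport (𝕂 := ℝ) hc hs (by simp)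
  obtain ⟨B, hB⟩ := hc.exists_bound_of_continuous hη
  obtain ⟨C, hC, H⟩ := aux_radial N hN (m := p) (γ := 2 * (p - 1)) (by linarith) (by linarith)
  have hp0 : 0 < p := by linarith
  have hB0 : 0 ≤ B := (norm_nonneg _).trans (hB 0)
  set M : ℝ := L + 2 * B with hM
  have hM0 : 0 ≤ M := by positivity
  set S := tsupport η with hS
  have hSm : MeasurableSet S := (isClosed_tsupport η).measurableSet
  set V := volume S with hV
  have hVt : V ≠ ⊤ := hc.isCompact.measure_lt_top.ne
  have hdiff : ∀ x h, |η (x + h) - η x| ≤ M * min 1 ‖h‖ := by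
    intro x h
    have l1 : |η (x + h) - η x| ≤ L * ‖h‖ := by
      have := hL.dist_le_mul (x + h) x
      simpa [Real.dist_eq] using this
    have l2 : |η (x + h) - η x| ≤ 2 * B := by
      have i1 := abs_le.1 (hB x); have i2 := abs_le.1 (hB (x + h))
      rw [abs_le]; constructor <;> linarith
    have hL0 := L.coe_nonneg
    rcases le_total 1 ‖h‖ with hh | hh
    · rw [min_eq_left hh]; linarith
    · rw [min_eq_right hh]; nlinarith [norm_nonneg h]
  have key : ∀ h : Euc N, ∫⁻ x, ENNReal.ofReal |η (x + h) - η x| ^ p ≤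
      ENNReal.ofReal (M * min 1 ‖h‖) ^ p * (V + V) := by
    intro h
    set c := ENNReal.ofReal (M * min 1 ‖h‖) ^ p with hcdef
    have hct : c ≠ ⊤ := by simp [hcdef, hp0.le]
    have i1 : ∫⁻ x, S.indicator (fun _ => c) x = c * V := lintegral_indicator_const hSm c
    calc _ ≤ ∫⁻ x, (S.indicator (fun _ => c) (x + h) + S.indicator (fun _ => c) x) := by
          apply lintegral_mono; intro x
          simp only
          have hle : ENNReal.ofReal |η (x + h) - η x| ^ p ≤ c :=
            ENNReal.rpow_le_rpow (ENNReal.ofReal_le_ofReal (hdiff x h)) hp0.le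
          by_cases h1 : x + h ∈ S
          · rw [indicator_of_mem h1]; exact hle.trans le_self_add
          · by_cases h2 : x ∈ S
            · rw [indicator_of_mem h2]; exact hle.trans le_add_self
            · rw [image_eq_zero_of_notMem_tsupport h1, image_eq_zero_of_notMem_tsupport h2]; simp [hp0]
      _ = c * V + c * V := by
          rw [lintegral_add_right _ (measurable_const.indicator hSm),
            lintegral_add_right_eq_self (fun x => S.indicator (fun _ => c) x), i1]
      _ = _ := by ring
  rw [bes_swap N hp hη]
  have : ∫⁻ h, ENNReal.ofReal (‖h‖ ^ (-((N:ℝ) + 2 * (p - 1)))) *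
      ∫⁻ x, ENNReal.ofReal |η (x + h) - η x| ^ p ≤ ENNReal.ofReal (M ^ p) * (V + V) *
        ENNReal.ofReal (C * 1 ^ (-(2 * (p - 1)))) := by
    calc _ ≤ ∫⁻ h : Euc N, ENNReal.ofReal (M ^ p) * (V + V) *
          ENNReal.ofReal (min 1 (‖h‖ / 1) ^ p * ‖h‖ ^ (-((N:ℝ) + 2 * (p - 1)))) := by
          apply lintegral_mono; intro h
          simp only
          refine (mul_le_mul_right (key h) _).trans (le_of_eq ?_)
          have hmin : 0 ≤ min 1 ‖h‖ := by positivity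
          rw [ENNReal.ofReal_rpow_of_nonneg (by positivity) hp0.le, mul_rpow hM0 hmin,
            ENNReal.ofReal_mul (by positivity), div_one, ENNReal.ofReal_mul (by positivity)]
          ring
      _ ≤ _ := by
          rw [lintegral_const_mul _ (by fun_prop)]
          exact mul_le_mul_right (H 1 one_pos) _
  exact ne_top_of_le_ne_top (by finiteness) this

lemma heatPotM_eq (N : ℕ) (μ : Measure (Euc N)) {t : ℝ} (ht : 0 < t) (x : Euc N) :
    heatPotM N μ x t = (Upot N μ (t, x)).toReal := by
  unfold heatPotM Upot
  rw [integral_eq_lintegral_of_nonneg_ae]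
  · rfl
  · exact Eventually.of_forall fun y => (gk_pos N ht (x - y)).le
  · exact ((gk_cont N t).comp (continuous_const.sub continuous_id)).aestronglyMeasurable

lemma Upot_lt (N : ℕ) (μ : Measure (Euc N)) [IsFiniteMeasure μ] {t : ℝ} (ht : 0 < t) (x : Euc N) :
    Upot N μ (t, x) < ⊤ := by
  unfold Upot
  calc _ ≤ ∫⁻ _, ENNReal.ofReal ((4 * π * t) ^ (-(N : ℝ) / 2)) ∂μ :=
        lintegral_mono fun y => ENNReal.ofReal_le_ofReal (gk_le N ht _)
    _ = ENNReal.ofReal ((4 * π * t) ^ (-(N : ℝ) / 2)) * μ univ := lintegral_const _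
    _ < ⊤ := ENNReal.mul_lt_top ENNReal.ofReal_lt_top (measure_lt_top _ _)

lemma int_eq (N : ℕ) {q T : ℝ} (hq : 0 < q) (μ : Measure (Euc N)) [IsFiniteMeasure μ]
    (hI : ∫⁻ v, Upot N μ v ^ q ∂(nuT N T) ≠ ⊤) :
    ∫ t in Set.Ioc (0 : ℝ) T, ∫ x, heatPotM N μ x t ^ q =
      (∫⁻ v, Upot N μ v ^ q ∂(nuT N T)).toReal := by
  have hm : Measurable fun v => Upot N μ v ^ q := (Upot_meas N μ).pow_const q
  have hm2 : Measurable fun t : ℝ => ∫⁻ x, Upot N μ (t, x) ^ q := hm.lintegral_prod_right'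
  rw [nuT_lint N T hm] at hI ⊢
  rw [← integral_toReal hm2.aemeasurable (ae_lt_top hm2 hI)]
  refine setIntegral_congr_fun measurableSet_Ioc fun t ht => ?_
  have ht0 : 0 < t := ht.1
  rw [← integral_toReal (f := fun x => Upot N μ (t, x) ^ q) (hm.comp measurable_prodMk_left).aemeasurable
    (Eventually.of_forall fun x => ENNReal.rpow_lt_top_of_nonneg hq.le (Upot_lt N μ ht0 x).ne)]
  refine integral_congr_ae (Eventually.of_forall fun x => ?_)
  simp only
  rw [heatPotM_eq N μ ht0, ENNReal.toReal_rpow]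

lemma Lp_fin (N : ℕ) {p : ℝ} (hp : 0 < p) {η : Euc N → ℝ} (hη : Continuous η) (hc : HasCompactSupport η) :
    ∫⁻ x, ENNReal.ofReal (|η x| ^ p) ≠ ⊤ := by
  have h : Integrable (fun x => |η x| ^ p) := by
    apply Continuous.integrable_of_hasCompactSupport
    · exact hη.abs.rpow_const fun x => Or.inr hp.le
    · exact hc.comp_left (g := fun s => |s| ^ p) (by simp [zero_rpow hp.ne'])
  rw [← ofReal_integral_eq_lintegral_ofReal h (Eventually.of_forall fun x => by positivity)]
  exact ENNReal.ofReal_ne_top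

theorem final (N : ℕ) (hN : 1 ≤ N) (q : ℝ) (hq2 : 2 < q)
    (T : ℝ) (hT : 0 < T) :
    ∃ c : ℝ, 0 < c ∧
      ∀ μ : Measure (Euc N), IsFiniteMeasure μ → BddAbove (dualSet N q μ) →
        c⁻¹ * sSup (dualSet N q μ) ≤
            (∫ t in Set.Ioc (0 : ℝ) T, ∫ x, heatPotM N μ x t ^ q) ^ (1 / q) ∧
          (∫ t in Set.Ioc (0 : ℝ) T, ∫ x, heatPotM N μ x t ^ q) ^ (1 / q) ≤
            c * sSup (dualSet N q μ) := by
  obtain ⟨C, hC, HC⟩ := upperA N hN hq2 hT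
  obtain ⟨D, hD, HD⟩ := lowerB N hq2 hT
  obtain ⟨a1, a2, a3, a4⟩ := q_facts hq2
  have hq0 : 0 < q := by linarith
  refine ⟨max C D, lt_max_of_lt_left hC, fun μ hμ hb => ?_⟩
  have hI := HC μ hμ hb
  have hM := sSup_nonneg_dual N hq2 μ hb
  have hIt : ∫⁻ v, Upot N μ v ^ q ∂(nuT N T) ≠ ⊤ := ne_top_of_le_ne_top ENNReal.ofReal_ne_top hI
  rw [int_eq N hq0 μ hIt]
  have hne : (dualSet N q μ).Nonempty := by
    have hp : 0 < q / (q - 1) := by linarith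
    exact ⟨_, mem_dual N hq2 μ (ζ := fun _ => 0) contDiff_const HasCompactSupport.zero
      (by simp [zero_rpow hp.ne']) (by simp [bes, zero_rpow hp.ne'])⟩
  have HD' := HD μ hμ
  set I := ∫⁻ v, Upot N μ v ^ q ∂(nuT N T) with hIdef
  have hA : 0 ≤ I.toReal ^ (1 / q) := by positivity
  have low : sSup (dualSet N q μ) ≤ D * I.toReal ^ (1 / q) := by
    refine csSup_le hne ?_
    rintro r ⟨η, hs, hc, h1, rfl⟩
    have h2 := HD' η hs hc
    rw [a3, a4] at h1
    set p := q / (q - 1) with hp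
    have hp0 : 0 < p := by linarith
    have hbf := bes_finite N hN a1 a2 hs hc
    have hlf := Lp_fin N hp0 hs.continuous hc
    rw [Lp_real N p hs.continuous, bes_real N hs.continuous hbf, ENNReal.toReal_rpow,
      ENNReal.toReal_rpow, ← ENNReal.toReal_add (by finiteness) (by finiteness)] at h1
    set Y := (∫⁻ x, ENNReal.ofReal (|η x| ^ p)) ^ (1 / p) + bes N p η ^ (1 / p) with hY
    have hYt : Y ≠ ⊤ := by rw [hY]; finiteness
    have hIq : I ^ (1 / q) ≠ ⊤ := by finiteness
    have h3 := ENNReal.toReal_mono (by finiteness) h2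
    rw [ENNReal.toReal_ofReal (abs_nonneg _), ENNReal.toReal_mul, ENNReal.toReal_mul,
      ENNReal.toReal_ofReal hD.le, ← ENNReal.toReal_rpow] at h3
    refine (le_abs_self _).trans (h3.trans ?_)
    exact mul_le_of_le_one_right (by positivity) h1
  constructor
  · rw [inv_mul_le_iff₀ (lt_max_of_lt_left hC)]
    exact low.trans (mul_le_mul_of_nonneg_right (le_max_right _ _) hA)
  · have hCM : 0 ≤ C * sSup (dualSet N q μ) := by positivity
    calc I.toReal ^ (1 / q) ≤ ((C * sSup (dualSet N q μ)) ^ q) ^ (1 / q) := by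
          refine rpow_le_rpow ENNReal.toReal_nonneg ?_ (by positivity)
          exact ENNReal.toReal_le_of_le_ofReal (by positivity) hI
      _ = C * sSup (dualSet N q μ) := by
          rw [← rpow_mul hCM, mul_one_div_cancel hq0.ne', rpow_one]
      _ ≤ _ := mul_le_mul_of_nonneg_right (le_max_left _ _) hM

/-- Lemma 2.11: two-sided comparison of the dual Besov norm of a bounded
positive measure with the `L^q(Q_T)` norm of its heat potential. -/
theorem stmt9 (N : ℕ) (hN : 1 ≤ N) (q : ℝ) (hq2 : 2 < q) (hqc : 1 + (N : ℝ) / 2 ≤ q)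
    (T : ℝ) (hT : 0 < T) :
    ∃ c : ℝ, 0 < c ∧
      ∀ μ : Measure (Euc N), IsFiniteMeasure μ → BddAbove (dualSet N q μ) →
        c⁻¹ * sSup (dualSet N q μ) ≤
            (∫ t in Set.Ioc (0 : ℝ) T, ∫ x, heatPotM N μ x t ^ q) ^ (1 / q) ∧
          (∫ t in Set.Ioc (0 : ℝ) T, ∫ x, heatPotM N μ x t ^ q) ^ (1 / q) ≤
            c * sSup (dualSet N q μ) := by
  exact final N hN q hq2 T hT

end
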